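/- Let N ≥ 1, let Ω ⊂ ℝ^N be a bounded open set with smooth boundary, let 1 < p ≤ θ, and let λ* > 0, σ > 0. Suppose that for each λ ∈ (λ*/2, λ*) there is a pair (u_λ, v_λ) of functions in C²(Ω) ∩ C(closure Ω), positive in Ω and vanishing on ∂Ω, satisfying −Δu_λ = λ(v_λ+1)^p and −Δv_λ = σλ(u_λ+1)^θ in Ω, which is stable, and such that for each x ∈ Ω the maps λ ↦ u_λ(x) and λ ↦ v_λ(x) are nondecreasing. Let x₀ be the largest root of the polynomial H, i.e. H(x₀) = 0 and H(x) ≠ 0 for all x > x₀. If N < 2 + 2x₀, then sup over λ ∈ (λ*/2, λ*) and x ∈ Ω of (u_λ(x) + v_λ(x)) is finite; in particular the extremal solution u*(x) = lim_{λ↗λ*} u_λ(x), v*(x) = lim_{λ↗λ*} v_λ(x) is bounded. -/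

import Mathlib

open MeasureTheory Metric Real Set

noncomputable section

/-- The Euclidean Laplacian `Δw(x) = ∑ i, ∂²w/∂xᵢ²(x)` on `ℝ^N`. -/
def lap {N : ℕ} (w : EuclideanSpace ℝ (Fin N) → ℝ) (x : EuclideanSpace ℝ (Fin N)) : ℝ :=
  ∑ i : Fin N,
    fderiv ℝ (fun y => fderiv ℝ w y (EuclideanSpace.single i 1)) x (EuclideanSpace.single i 1)

/-- `φ` is a smooth compactly supported test function with support inside `Ω`. -/
def IsTestFun {N : ℕ} (Ω : Set (EuclideanSpace ℝ (Fin N)))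
    (φ : EuclideanSpace ℝ (Fin N) → ℝ) : Prop :=
  ContDiff ℝ (⊤ : ℕ∞) φ ∧ HasCompactSupport φ ∧ tsupport φ ⊆ Ω

/-- Stability of a classical solution of `-Δu = λ(v+1)^p, -Δv = γ(u+1)^θ` in `Ω`:
`√(λγpθ) ∫_Ω (v+1)^((p-1)/2) (u+1)^((θ-1)/2) φ² ≤ ∫_Ω |∇φ|²` for all test functions. -/
def IsStable {N : ℕ} (Ω : Set (EuclideanSpace ℝ (Fin N))) (lam gam p θ : ℝ)
    (u v : EuclideanSpace ℝ (Fin N) → ℝ) : Prop :=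
  ∀ φ : EuclideanSpace ℝ (Fin N) → ℝ, IsTestFun Ω φ →
    Real.sqrt (lam * gam * p * θ) *
        ∫ x in Ω, (v x + 1) ^ ((p - 1) / 2) * (u x + 1) ^ ((θ - 1) / 2) * φ x ^ 2
      ≤ ∫ x in Ω, ‖gradient φ x‖ ^ 2

/-- `Ω` has smooth boundary: near each boundary point, `Ω` is the sublevel set of a
smooth defining function with nonvanishing differential. -/
def HasSmoothBoundary {N : ℕ} (Ω : Set (EuclideanSpace ℝ (Fin N))) : Prop :=
  ∀ x ∈ frontier Ω, ∃ (U : Set (EuclideanSpace ℝ (Fin N)))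
    (f : EuclideanSpace ℝ (Fin N) → ℝ), IsOpen U ∧ x ∈ U ∧ ContDiff ℝ (⊤ : ℕ∞) f ∧
    (∀ y ∈ U, fderiv ℝ f y ≠ 0) ∧ (∀ y ∈ U, y ∈ Ω ↔ f y < 0)

/-- The quartic polynomial `L`. -/
def Lpoly (p θ s : ℝ) : ℝ :=
  s ^ 4 - (16 * p * θ * (p + 1) / (θ + 1)) * s ^ 2
    + (16 * p * θ * (p + 1) * (p + θ + 2) / (θ + 1) ^ 2) * s
    - 16 * p * θ * (p + 1) ^ 2 / (θ + 1) ^ 2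

/-- The quartic polynomial `H`. -/
def Hpoly (p θ x : ℝ) : ℝ :=
  x ^ 4 - (16 * p * θ * (p + 1) * (θ + 1) / (p * θ - 1) ^ 2) * x ^ 2
    + (16 * p * θ * (p + 1) * (θ + 1) * (p + θ + 2) / (p * θ - 1) ^ 3) * x
    - 16 * p * θ * (p + 1) ^ 2 * (θ + 1) ^ 2 / (p * θ - 1) ^ 4

/-!
The system and `H` are symmetric in `(u, p)` and `(v, θ)`, so let `p ≤ θ`. Write
`ω = (v+1)^((p-1)/2) (u+1)^((θ-1)/2)` for the stability weight and `α = (θ+1)/(p+1)`. Test the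
stability inequality with powers of `u + 1` and of `v + 1`, truncated near `0` so that they have
compact support in `Ω`. When `L(s) < 0`, Young's inequality combines the two resulting estimates
into a bound for `∫ ω ((u+1)^(α s) + (v+1)^s)` that does not depend on `λ`. The substitution
`x = s (θ+1)/(pθ-1)` turns `H` into `L`, so this applies to `x` slightly below `x₀`. By the maximum
principle `c (u+1)^α ≤ v + 1`, and the bound becomes one for `∫ (u+1)^E` with `E = θ - α + α s`.
The equation `-Δv = σλ (u+1)^θ` bounds `sup v` by `∫ v` and the `L^r` norm of `(u+1)^θ` for
`r > N/2`. When `N < 2 + 2x` one may choose `r` with `(θ - α) r < E`, and then this bound grows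
sublinearly in `sup v`.
-/

open Filter
open scoped Topology Convolution

/-! ### The quartic -/

lemma Lpoly_eq {p θ : ℝ} (hp : p + 1 ≠ 0) (hθ : θ + 1 ≠ 0) (s : ℝ) :
    Lpoly p θ s = s ^ 4 -
      16 * p * θ * ((p + 1) / (θ + 1)) ^ 2 * ((θ + 1) / (p + 1) * s - 1) * (s - 1) := by
  unfold Lpoly
  field_simp
  ring

lemma Hpoly_mul {p θ : ℝ} (hθ : θ + 1 ≠ 0) (s : ℝ) :
    Hpoly p θ ((θ + 1) / (p * θ - 1) * s) = ((θ + 1) / (p * θ - 1)) ^ 4 * Lpoly p θ s := by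
  unfold Hpoly Lpoly
  field_simp

lemma Lpoly_add_one_neg {p θ : ℝ} (hp : 1 < p) (hθ : 1 < θ) : Lpoly p θ (p + 1) < 0 := by
  have hfactor : Lpoly p θ (p + 1) = (p + 1) ^ 2 / (θ + 1) ^ 2 *
      (((p + 1) * (θ + 1)) ^ 2 - (4 * (p * θ)) ^ 2) := by
    rw [Lpoly_eq (by positivity) (by positivity)]
    field_simp
    ring
  have hlt : (p + 1) * (θ + 1) < 4 * (p * θ) := by nlinarith
  rw [hfactor]
  refine mul_neg_of_pos_of_neg (by positivity) (sub_neg.2 ?_)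
  exact pow_lt_pow_left₀ hlt (by positivity) two_ne_zero

-- Divided by `x - s₀`, the quartic becomes a cubic that is convex on `[1, ∞)`, negative at `1` and
-- positive at `a`, hence positive from `a` on.
lemma Lpoly_neg_of_lt_root {p θ a s s₀ : ℝ} (hp : p + 1 ≠ 0) (hθ : θ + 1 ≠ 0) (ha : 1 < a)
    (hLa : Lpoly p θ a < 0) (hroot : Lpoly p θ s₀ = 0) (has : a < s) (hs : s < s₀) :
    Lpoly p θ s < 0 := by
  set A := 16 * p * θ * ((p + 1) / (θ + 1)) ^ 2
  set α := (θ + 1) / (p + 1)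
  have hL (x : ℝ) : Lpoly p θ x = x ^ 4 - A * (α * x - 1) * (x - 1) := Lpoly_eq hp hθ x
  let Q : ℝ → ℝ := fun x => x ^ 3 + s₀ * x ^ 2 + (s₀ ^ 2 - A * α) * x
    + (s₀ ^ 3 - A * α * s₀ + A * (α + 1))
  have hLQ (x : ℝ) : Lpoly p θ x = (x - s₀) * Q x := by
    rw [hL] at hroot ⊢
    linear_combination hroot
  have hQ1 : Q 1 < 0 := by
    have h : (1 - s₀) * Q 1 = 1 := by rw [← hLQ, hL]; ring
    by_contra! hc
    nlinarith
  have hQa : 0 < Q a := by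
    rw [hLQ] at hLa
    exact pos_of_mul_neg_right hLa (by linarith)
  have hconvex : (s - 1) * Q a ≤ (s - a) * Q 1 + (a - 1) * Q s := by
    have hdiff : (s - a) * Q 1 + (a - 1) * Q s - (s - 1) * Q a =
        (s - 1) * (a - 1) * (s - a) * (1 + a + s + s₀) := by
      simp only [Q]; ring
    rw [← sub_nonneg, hdiff]
    apply mul_nonneg (mul_nonneg (mul_nonneg _ _) _) <;> linarith
  have hQs : 0 < Q s := by
    by_contra! hc
    nlinarith
  rw [hLQ]
  exact mul_neg_of_neg_of_pos (by linarith) hQs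

lemma exists_gt_Lpoly_pos {p θ : ℝ} (hp : 0 < p) (hθ : 0 < θ) (a : ℝ) :
    ∃ S, a < S ∧ 0 < Lpoly p θ S := by
  set A := 16 * p * θ * ((p + 1) / (θ + 1)) ^ 2
  set α := (θ + 1) / (p + 1)
  have hA : 0 < A := by positivity
  have hAα : 0 < A * α := by positivity
  obtain ⟨S, haS, hS⟩ : ∃ S, a < S ∧ 1 + A * α < S :=
    ⟨max a (1 + A * α) + 1, by linarith [le_max_left a (1 + A * α)],
      by linarith [le_max_right a (1 + A * α)]⟩
  refine ⟨S, haS, ?_⟩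
  have hL : Lpoly p θ S = S ^ 4 - A * (α * S - 1) * (S - 1) := Lpoly_eq (by positivity)
    (by positivity) S
  have hS₀ : 0 < S := by linarith
  rw [hL, sub_pos]
  calc A * (α * S - 1) * (S - 1) ≤ A * α * S ^ 2 := by nlinarith
    _ < S * S ^ 2 := by gcongr; linarith
    _ ≤ S ^ 4 := by nlinarith [pow_pos hS₀ 3]

lemma lt_of_Lpoly_neg {p θ a s₀ : ℝ} (hp : 0 < p) (hθ : 0 < θ) (hLa : Lpoly p θ a < 0)
    (hmax : ∀ s, s₀ < s → Lpoly p θ s ≠ 0) : a < s₀ := by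
  obtain ⟨S, haS, hS⟩ := exists_gt_Lpoly_pos hp hθ a
  have hcont : ContinuousOn (Lpoly p θ) (Icc a S) := by unfold Lpoly; fun_prop
  obtain ⟨z, hz, hLz⟩ := intermediate_value_Icc haS.le hcont ⟨hLa.le, hS.le⟩
  have haz : a < z := hz.1.lt_of_ne fun h => hLa.ne (h ▸ hLz)
  exact haz.trans_le (not_lt.1 fun h => hmax z h hLz)

lemma exists_Lpoly_neg {p θ x₀ d : ℝ} (hp : 1 < p) (hθ : 1 < θ) (hroot : Hpoly p θ x₀ = 0)
    (hmax : ∀ x, x₀ < x → Hpoly p θ x ≠ 0) (hd : d < x₀) :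
    ∃ s, p + 1 < s ∧ Lpoly p θ s < 0 ∧ d < (θ + 1) / (p * θ - 1) * s := by
  have hpθ : 0 < p * θ - 1 := by nlinarith
  set k := (θ + 1) / (p * θ - 1)
  have hk : 0 < k := by positivity
  obtain ⟨s₀, rfl⟩ : ∃ s₀, x₀ = k * s₀ := ⟨x₀ / k, by field_simp⟩
  have hHL (s : ℝ) : Hpoly p θ (k * s) = k ^ 4 * Lpoly p θ s :=
    Hpoly_mul (by positivity) s
  have hL₀ : Lpoly p θ s₀ = 0 := (mul_eq_zero.1 (hHL s₀ ▸ hroot)).resolve_left (by positivity)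
  have hLmax (s : ℝ) (hs : s₀ < s) : Lpoly p θ s ≠ 0 := fun h =>
    hmax (k * s) (by gcongr) (by rw [hHL, h, mul_zero])
  have hneg := Lpoly_add_one_neg hp hθ
  have hlt : p + 1 < s₀ := lt_of_Lpoly_neg (by linarith) (by linarith) hneg hLmax
  obtain ⟨s, hs, hss₀⟩ := exists_between (max_lt hlt ((div_lt_iff₀' hk).2 hd))
  obtain ⟨hps, hds⟩ := max_lt_iff.1 hs
  exact ⟨s, hps, Lpoly_neg_of_lt_root (by positivity) (by positivity) (by linarith) hneg hL₀ hps
    hss₀, (div_lt_iff₀' hk).1 hds⟩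

/-! ### Partial derivatives and Green's formula -/

section PartialDeriv

variable {N : ℕ} {i : Fin N} {Ω : Set (EuclideanSpace ℝ (Fin N))}
  {w z : EuclideanSpace ℝ (Fin N) → ℝ} {x : EuclideanSpace ℝ (Fin N)}

/-- The partial derivative `∂w/∂xᵢ(x)`, so that `lap w = ∑ i, ∂ᵢ∂ᵢw`. -/
def partialDeriv (i : Fin N) (w : EuclideanSpace ℝ (Fin N) → ℝ) (x : EuclideanSpace ℝ (Fin N)) :
    ℝ :=
  fderiv ℝ w x (EuclideanSpace.single i 1)

lemma lap_eq_sum_partialDeriv (w : EuclideanSpace ℝ (Fin N) → ℝ) (x : EuclideanSpace ℝ (Fin N)) :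
    lap w x = ∑ i, partialDeriv i (partialDeriv i w) x := rfl

lemma sq_norm_gradient (w : EuclideanSpace ℝ (Fin N) → ℝ) (x : EuclideanSpace ℝ (Fin N)) :
    ‖gradient w x‖ ^ 2 = ∑ i, partialDeriv i w x ^ 2 := by
  rw [EuclideanSpace.norm_sq_eq]
  refine Finset.sum_congr rfl fun i _ => ?_
  have hcoord : gradient w x i = partialDeriv i w x := by
    have := InnerProductSpace.toDual_symm_apply (𝕜 := ℝ) (y := fderiv ℝ w x)
      (x := EuclideanSpace.single i 1)
    rw [partialDeriv, gradient, ← this, EuclideanSpace.inner_single_right]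
    simp
  rw [Real.norm_eq_abs, sq_abs, hcoord]

lemma partialDeriv_congr (h : w =ᶠ[𝓝 x] z) : partialDeriv i w =ᶠ[𝓝 x] partialDeriv i z := by
  filter_upwards [h.eventuallyEq_nhds] with y hy
  rw [partialDeriv, partialDeriv, hy.fderiv_eq]

lemma lap_congr (h : w =ᶠ[𝓝 x] z) : lap w x = lap z x :=
  Finset.sum_congr rfl fun _ _ => (partialDeriv_congr (partialDeriv_congr h)).eq_of_nhds

lemma contDiffAt_partialDeriv (h : ContDiffAt ℝ 2 w x) : ContDiffAt ℝ 1 (partialDeriv i w) x :=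
  (h.fderiv_right (m := 1) (by norm_num)).clm_apply contDiffAt_const

lemma contDiffOn_partialDeriv (hΩ : IsOpen Ω) (h : ContDiffOn ℝ 2 w Ω) :
    ContDiffOn ℝ 1 (partialDeriv i w) Ω :=
  fun _ hx => (contDiffAt_partialDeriv (h.contDiffAt (hΩ.mem_nhds hx))).contDiffWithinAt

lemma continuousOn_partialDeriv (hΩ : IsOpen Ω) (h : ContDiffOn ℝ 1 w Ω) :
    ContinuousOn (partialDeriv i w) Ω :=
  (h.continuousOn_fderiv_of_isOpen hΩ le_rfl).clm_apply continuousOn_const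

lemma continuous_partialDeriv (h : ContDiff ℝ 1 w) : Continuous (partialDeriv i w) :=
  (h.continuous_fderiv one_ne_zero).clm_apply continuous_const

lemma partialDeriv_comp {G : ℝ → ℝ} {g : ℝ} (hw : DifferentiableAt ℝ w x)
    (hG : HasDerivAt G g (w x)) :
    partialDeriv i (fun y => G (w y)) x = g * partialDeriv i w x := by
  have h : HasFDerivAt (fun y => G (w y)) (g • fderiv ℝ w x) x :=
    hG.comp_hasFDerivAt x hw.hasFDerivAt
  rw [partialDeriv, h.fderiv, _root_.smul_apply, smul_eq_mul, partialDeriv]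

lemma partialDeriv_mul (hw : DifferentiableAt ℝ w x) (hz : DifferentiableAt ℝ z x) :
    partialDeriv i (fun y => w y * z y) x =
      w x * partialDeriv i z x + z x * partialDeriv i w x := by
  have h : fderiv ℝ (fun y => w y * z y) x = w x • fderiv ℝ z x + z x • fderiv ℝ w x :=
    (hw.hasFDerivAt.mul hz.hasFDerivAt).fderiv
  simp [partialDeriv, h]

lemma partialDeriv_const_mul_sub (c : ℝ) (hw : DifferentiableAt ℝ w x)
    (hz : DifferentiableAt ℝ z x) :
    partialDeriv i (fun y => c * w y - z y) x = c * partialDeriv i w x - partialDeriv i z x := by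
  have h : fderiv ℝ (fun y => c * w y - z y) x = c • fderiv ℝ w x - fderiv ℝ z x :=
    ((hw.hasFDerivAt.const_mul c).sub hz.hasFDerivAt).fderiv
  simp [partialDeriv, h]

lemma lap_comp {G g : ℝ → ℝ} {g' : ℝ} (hw : ContDiffAt ℝ 2 w x)
    (hG : ∀ᶠ t in 𝓝 (w x), HasDerivAt G (g t) t) (hg : HasDerivAt g g' (w x)) :
    lap (fun y => G (w y)) x = g (w x) * lap w x + g' * ∑ i, partialDeriv i w x ^ 2 := by
  simp only [lap_eq_sum_partialDeriv, Finset.mul_sum, ← Finset.sum_add_distrib]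
  refine Finset.sum_congr rfl fun i _ => ?_
  have hwd : DifferentiableAt ℝ w x := hw.differentiableAt two_ne_zero
  have hgd : DifferentiableAt ℝ (fun y => g (w y)) x :=
    (hg.comp_hasFDerivAt x hwd.hasFDerivAt).differentiableAt
  have hgrad : partialDeriv i (fun y => G (w y)) =ᶠ[𝓝 x] fun y => g (w y) * partialDeriv i w y := by
    filter_upwards [hw.eventually (by simp), hw.continuousAt.eventually hG] with y hwy hGy
    exact partialDeriv_comp (hwy.differentiableAt two_ne_zero) hGy
  rw [(partialDeriv_congr hgrad).eq_of_nhds,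
    partialDeriv_mul hgd ((contDiffAt_partialDeriv hw).differentiableAt one_ne_zero),
    partialDeriv_comp hwd hg]
  ring

lemma lap_const_mul_sub (c : ℝ) (hw : ContDiffAt ℝ 2 w x) (hz : ContDiffAt ℝ 2 z x) :
    lap (fun y => c * w y - z y) x = c * lap w x - lap z x := by
  simp only [lap_eq_sum_partialDeriv, Finset.mul_sum, ← Finset.sum_sub_distrib]
  refine Finset.sum_congr rfl fun i _ => ?_
  have hgrad : partialDeriv i (fun y => c * w y - z y) =ᶠ[𝓝 x]
      fun y => c * partialDeriv i w y - partialDeriv i z y := by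
    filter_upwards [hw.eventually (by simp), hz.eventually (by simp)] with y hwy hzy
    exact partialDeriv_const_mul_sub c (hwy.differentiableAt two_ne_zero)
      (hzy.differentiableAt two_ne_zero)
  rw [(partialDeriv_congr hgrad).eq_of_nhds]
  exact partialDeriv_const_mul_sub c ((contDiffAt_partialDeriv hw).differentiableAt one_ne_zero)
    ((contDiffAt_partialDeriv hz).differentiableAt one_ne_zero)

lemma hasDerivAt_comp_add_smul_single {t : ℝ}
    (hw : DifferentiableAt ℝ w (x + t • EuclideanSpace.single i 1)) :
    HasDerivAt (fun t : ℝ => w (x + t • EuclideanSpace.single i 1))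
      (partialDeriv i w (x + t • EuclideanSpace.single i 1)) t := by
  have hline : HasDerivAt (fun t : ℝ => x + t • EuclideanSpace.single i (1 : ℝ))
      (EuclideanSpace.single i 1) t := by
    simpa using ((hasDerivAt_id t).smul_const (EuclideanSpace.single i (1 : ℝ))).const_add x
  exact hw.hasFDerivAt.comp_hasDerivAt t hline

lemma partialDeriv_partialDeriv_nonpos_of_isLocalMax (hw : ContDiffAt ℝ 2 w x)
    (hmax : IsLocalMax w x) : partialDeriv i (partialDeriv i w) x ≤ 0 := by
  let ℓ : ℝ → EuclideanSpace ℝ (Fin N) := fun t => x + t • EuclideanSpace.single i 1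
  have hℓ : Tendsto ℓ (𝓝 0) (𝓝 x) :=
    (by fun_prop : Continuous ℓ).tendsto' 0 x (by simp [ℓ])
  have hderiv : deriv (w ∘ ℓ) =ᶠ[𝓝 0] partialDeriv i w ∘ ℓ := by
    filter_upwards [hℓ.eventually (hw.eventually (by simp))] with t ht
    exact (hasDerivAt_comp_add_smul_single (ht.differentiableAt two_ne_zero)).deriv
  have hderiv₂ : deriv (deriv (w ∘ ℓ)) 0 = partialDeriv i (partialDeriv i w) x := by
    have hpd : DifferentiableAt ℝ (partialDeriv i w)
        (x + (0 : ℝ) • EuclideanSpace.single i (1 : ℝ)) := by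
      simpa using (contDiffAt_partialDeriv hw).differentiableAt one_ne_zero
    have := (hasDerivAt_comp_add_smul_single hpd).deriv
    simp only [zero_smul, add_zero] at this
    rw [hderiv.deriv_eq, ← this]
    rfl
  have hℓ₀ : ℓ 0 = x := by simp [ℓ]
  have hmax₀ : IsLocalMax (w ∘ ℓ) 0 := by
    filter_upwards [hℓ.eventually hmax] with t ht
    simpa only [Function.comp_apply, hℓ₀] using ht
  by_contra! hpos
  have hmin₀ : IsLocalMin (w ∘ ℓ) 0 := by
    refine isLocalMin_of_deriv_deriv_pos (hderiv₂ ▸ hpos) hmax₀.deriv_eq_zero ?_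
    exact ContinuousAt.comp (hℓ₀ ▸ hw.continuousAt) (by fun_prop)
  have hconst : w ∘ ℓ =ᶠ[𝓝 0] fun _ => (w ∘ ℓ) 0 := by
    filter_upwards [hmax₀, hmin₀] with t h₁ h₂ using le_antisymm h₁ h₂
  rw [← hderiv₂, hconst.deriv.deriv_eq] at hpos
  simp at hpos

lemma lap_nonpos_of_isLocalMax (hw : ContDiffAt ℝ 2 w x) (hmax : IsLocalMax w x) :
    lap w x ≤ 0 :=
  Finset.sum_nonpos fun _ _ => partialDeriv_partialDeriv_nonpos_of_isLocalMax hw hmax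

lemma tsupport_partialDeriv_subset (w : EuclideanSpace ℝ (Fin N) → ℝ) :
    tsupport (partialDeriv i w) ⊆ tsupport w :=
  (closure_mono (Function.support_subset_iff'.2 fun y hy => by
    simp [partialDeriv, Function.notMem_support.1 hy])).trans (tsupport_fderiv_subset ℝ)

lemma integrable_mul_of_tsupport_subset {a b : EuclideanSpace ℝ (Fin N) → ℝ} (hΩ : IsOpen Ω)
    (ha : ContinuousOn a Ω) (hb : Continuous b) (hc : HasCompactSupport b)
    (hs : tsupport b ⊆ Ω) : Integrable (fun x => a x * b x) := by
  have hcont : Continuous (fun x => a x * b x) :=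
    continuous_of_tsupport fun x hx => by
      have hxb : x ∈ tsupport b := tsupport_mul_subset_right hx
      exact (ha.continuousAt (hΩ.mem_nhds (hs hxb))).mul hb.continuousAt
  exact hcont.integrable_of_hasCompactSupport (hc.mul_left (f := a))

theorem integral_partialDeriv_mul_partialDeriv {ψ : EuclideanSpace ℝ (Fin N) → ℝ} (hΩ : IsOpen Ω)
    (hw : ContDiffOn ℝ 2 w Ω) (hψ : ContDiff ℝ 1 ψ) (hc : HasCompactSupport ψ)
    (hs : tsupport ψ ⊆ Ω) :
    ∫ x, ∑ i, partialDeriv i w x * partialDeriv i ψ x = ∫ x, -lap w x * ψ x := by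
  have hw₁ (i : Fin N) := contDiffOn_partialDeriv (i := i) hΩ hw
  have hint₀ (i : Fin N) : Integrable (fun x => partialDeriv i w x * ψ x) :=
    integrable_mul_of_tsupport_subset hΩ (hw₁ i).continuousOn hψ.continuous hc hs
  have hint₁ (i : Fin N) : Integrable (fun x => partialDeriv i w x * partialDeriv i ψ x) :=
    integrable_mul_of_tsupport_subset hΩ (hw₁ i).continuousOn (continuous_partialDeriv hψ)
      (hc.mono' (subset_closure.trans (tsupport_partialDeriv_subset ψ)))
      ((tsupport_partialDeriv_subset ψ).trans hs)
  have hint₂ (i : Fin N) : Integrable (fun x => partialDeriv i (partialDeriv i w) x * ψ x) :=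
    integrable_mul_of_tsupport_subset hΩ (continuousOn_partialDeriv hΩ (hw₁ i)) hψ.continuous hc hs
  have hparts (i : Fin N) : ∫ x, partialDeriv i w x * partialDeriv i ψ x =
      -∫ x, partialDeriv i (partialDeriv i w) x * ψ x :=
    integral_mul_fderiv_eq_neg_fderiv_mul_of_integrable (hint₂ i) (hint₁ i) (hint₀ i)
      (fun x hx => ((hw₁ i).contDiffAt (hΩ.mem_nhds (hs hx))).differentiableAt one_ne_zero)
      (fun x _ => hψ.differentiable one_ne_zero x)
  calc ∫ x, ∑ i, partialDeriv i w x * partialDeriv i ψ x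
      = ∑ i, -∫ x, partialDeriv i (partialDeriv i w) x * ψ x := by
        rw [integral_finsetSum _ fun i _ => hint₁ i, Finset.sum_congr rfl fun i _ => hparts i]
    _ = ∫ x, -lap w x * ψ x := by
        rw [Finset.sum_neg_distrib, ← integral_finsetSum _ fun i _ => hint₂ i, ← integral_neg]
        simp only [lap_eq_sum_partialDeriv, neg_mul, Finset.sum_mul]

end PartialDeriv

/-! ### Truncations of functions with zero boundary values -/

/-- The positive functions of class `C²(Ω) ∩ C(closure Ω)` that vanish on `∂Ω`; both components of
a solution of the system belong to this class. -/
structure IsPosDirichlet {N : ℕ} (Ω : Set (EuclideanSpace ℝ (Fin N)))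
    (w : EuclideanSpace ℝ (Fin N) → ℝ) : Prop where
  contDiffOn : ContDiffOn ℝ 2 w Ω
  continuousOn : ContinuousOn w (closure Ω)
  pos : ∀ x ∈ Ω, 0 < w x
  eq_zero : ∀ x ∈ frontier Ω, w x = 0

namespace IsPosDirichlet

variable {N : ℕ} {Ω : Set (EuclideanSpace ℝ (Fin N))} {w : EuclideanSpace ℝ (Fin N) → ℝ}
  {x : EuclideanSpace ℝ (Fin N)} {G F : ℝ → ℝ}

lemma nonneg (hw : IsPosDirichlet Ω w) : ∀ x ∈ closure Ω, 0 ≤ w x := by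
  intro x hx
  rcases closure_eq_self_union_frontier Ω ▸ hx with hx | hx
  exacts [(hw.pos x hx).le, (hw.eq_zero x hx).ge]

lemma contDiffAt (hw : IsPosDirichlet Ω w) (hΩ : IsOpen Ω) (hx : x ∈ Ω) : ContDiffAt ℝ 2 w x :=
  hw.contDiffOn.contDiffAt (hΩ.mem_nhds hx)

lemma differentiableAt (hw : IsPosDirichlet Ω w) (hΩ : IsOpen Ω) (hx : x ∈ Ω) :
    DifferentiableAt ℝ w x :=
  (hw.contDiffAt hΩ hx).differentiableAt two_ne_zero

lemma indicator_comp_eventuallyEq_zero (hw : IsPosDirichlet Ω w) (hΩ : IsOpen Ω)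
    (hG : G =ᶠ[𝓝 0] 0) (hx : x ∉ Ω) : Ω.indicator (fun y => G (w y)) =ᶠ[𝓝 x] 0 := by
  by_cases hxc : x ∈ closure Ω
  · have hwx : w x = 0 := hw.eq_zero x (hΩ.frontier_eq ▸ ⟨hxc, hx⟩)
    have hlim : Tendsto w (𝓝[closure Ω] x) (𝓝 0) := hwx ▸ hw.continuousOn x hxc
    filter_upwards [eventually_nhdsWithin_iff.1 (hlim.eventually hG)] with y hy
    exact indicator_apply_eq_zero.2 fun hyΩ => hy (subset_closure hyΩ)
  · filter_upwards [isClosed_closure.isOpen_compl.mem_nhds hxc] with y hy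
    exact indicator_of_notMem (fun h => hy (subset_closure h)) _

lemma tsupport_indicator_comp_subset (hw : IsPosDirichlet Ω w) (hΩ : IsOpen Ω)
    (hG : G =ᶠ[𝓝 0] 0) : tsupport (Ω.indicator fun y => G (w y)) ⊆ Ω := fun _ hx =>
  by_contra fun hxΩ => notMem_tsupport_iff_eventuallyEq.2
    (hw.indicator_comp_eventuallyEq_zero hΩ hG hxΩ) hx

lemma hasCompactSupport_indicator_comp (hw : IsPosDirichlet Ω w) (hΩ : IsOpen Ω)
    (hΩb : Bornology.IsBounded Ω) (hG : G =ᶠ[𝓝 0] 0) :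
    HasCompactSupport (Ω.indicator fun y => G (w y)) :=
  Metric.isCompact_of_isClosed_isBounded (isClosed_tsupport _)
    (hΩb.subset (hw.tsupport_indicator_comp_subset hΩ hG))

lemma contDiff_indicator_comp (hw : IsPosDirichlet Ω w) (hΩ : IsOpen Ω) {n : WithTop ℕ∞}
    (hn : n ≤ 2) (hG : G =ᶠ[𝓝 0] 0) (hGn : ContDiff ℝ n G) :
    ContDiff ℝ n (Ω.indicator fun y => G (w y)) := by
  refine contDiff_iff_contDiffAt.2 fun x => ?_
  by_cases hx : x ∈ Ω
  · exact (hGn.contDiffAt.comp x ((hw.contDiffAt hΩ hx).of_le hn)).congr_of_eventuallyEq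
      (eqOn_indicator.eventuallyEq_of_mem (hΩ.mem_nhds hx))
  · exact contDiffAt_const.congr_of_eventuallyEq (hw.indicator_comp_eventuallyEq_zero hΩ hG hx)

lemma partialDeriv_indicator_comp (hw : IsPosDirichlet Ω w) (hΩ : IsOpen Ω) (hx : x ∈ Ω)
    {i : Fin N} {g : ℝ} (hG : HasDerivAt G g (w x)) :
    partialDeriv i (Ω.indicator fun y => G (w y)) x = g * partialDeriv i w x := by
  have hext : Ω.indicator (fun y => G (w y)) =ᶠ[𝓝 x] fun y => G (w y) :=
    eqOn_indicator.eventuallyEq_of_mem (hΩ.mem_nhds hx)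
  rw [(partialDeriv_congr hext).eq_of_nhds, partialDeriv_comp (hw.differentiableAt hΩ hx) hG]

lemma lap_indicator_comp (hw : IsPosDirichlet Ω w) (hΩ : IsOpen Ω) (hx : x ∈ Ω) {g' : ℝ}
    {g : ℝ → ℝ} (hG : ∀ t, HasDerivAt G (g t) t) (hg : HasDerivAt g g' (w x)) :
    lap (Ω.indicator fun y => G (w y)) x =
      g (w x) * lap w x + g' * ∑ i, partialDeriv i w x ^ 2 := by
  have hext : Ω.indicator (fun y => G (w y)) =ᶠ[𝓝 x] fun y => G (w y) :=
    eqOn_indicator.eventuallyEq_of_mem (hΩ.mem_nhds hx)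
  rw [lap_congr hext, lap_comp (hw.contDiffAt hΩ hx) (.of_forall hG) hg]

/-- Both sides equal `∫ ⟨∇w, ∇(F ∘ w)⟩`. -/
theorem integral_sq_norm_gradient_indicator_comp (hw : IsPosDirichlet Ω w) (hΩ : IsOpen Ω)
    (hΩb : Bornology.IsBounded Ω) {g : ℝ → ℝ} (hF₁ : ContDiff ℝ 1 F)
    (hG : ∀ t, HasDerivAt G (g t) t) (hF : ∀ t, HasDerivAt F (g t ^ 2) t)
    (hF₀ : F =ᶠ[𝓝 0] 0) :
    ∫ x in Ω, ‖gradient (Ω.indicator fun y => G (w y)) x‖ ^ 2 =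
      ∫ x in Ω, -lap w x * F (w x) := by
  set ψ : EuclideanSpace ℝ (Fin N) → ℝ := Ω.indicator fun y => F (w y)
  have hψ : tsupport ψ ⊆ Ω := hw.tsupport_indicator_comp_subset hΩ hF₀
  calc ∫ x in Ω, ‖gradient (Ω.indicator fun y => G (w y)) x‖ ^ 2
      = ∫ x in Ω, ∑ i, partialDeriv i w x * partialDeriv i ψ x := by
        refine setIntegral_congr_fun hΩ.measurableSet fun x hx => ?_
        simp only [sq_norm_gradient]
        refine Finset.sum_congr rfl fun i _ => ?_
        rw [hw.partialDeriv_indicator_comp hΩ hx (hG _),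
          hw.partialDeriv_indicator_comp hΩ hx (hF _)]
        ring
    _ = ∫ x, ∑ i, partialDeriv i w x * partialDeriv i ψ x := by
        refine setIntegral_eq_integral_of_forall_compl_eq_zero fun x hx => ?_
        refine Finset.sum_eq_zero fun i _ => mul_eq_zero_of_right _ ?_
        exact image_eq_zero_of_notMem_tsupport fun h =>
          hx (hψ (tsupport_partialDeriv_subset ψ h))
    _ = ∫ x, -lap w x * ψ x :=
        integral_partialDeriv_mul_partialDeriv hΩ hw.contDiffOn
          (hw.contDiff_indicator_comp hΩ (by norm_num) hF₀ hF₁)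
          (hw.hasCompactSupport_indicator_comp hΩ hΩb hF₀) hψ
    _ = ∫ x in Ω, -lap w x * F (w x) := by
        rw [← integral_indicator hΩ.measurableSet]
        congr 1 with x
        by_cases hx : x ∈ Ω <;> simp [ψ, hx]

end IsPosDirichlet

/-! ### Stability tested with `C¹` functions -/

section Mollification

variable {N : ℕ} {Ω : Set (EuclideanSpace ℝ (Fin N))} {φ : EuclideanSpace ℝ (Fin N) → ℝ}

lemma isTestFun_normed_convolution (b : ContDiffBump (0 : EuclideanSpace ℝ (Fin N)))
    (hφ : Continuous φ) (hc : HasCompactSupport φ) (hs : cthickening b.rOut (tsupport φ) ⊆ Ω) :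
    IsTestFun Ω (b.normed volume ⋆[ContinuousLinearMap.lsmul ℝ ℝ, volume] φ) := by
  set ψ := b.normed volume ⋆[ContinuousLinearMap.lsmul ℝ ℝ, volume] φ
  have hsupp : Function.support ψ ⊆ cthickening b.rOut (tsupport φ) := by
    refine (support_convolution_subset _).trans ?_
    rintro _ ⟨y, hy, z, hz, rfl⟩
    rw [b.support_normed_eq, mem_ball_zero_iff] at hy
    refine mem_cthickening_of_dist_le _ z _ _ (subset_tsupport _ hz) ?_
    simpa [dist_eq_norm] using hy.le
  have htsupp : tsupport ψ ⊆ cthickening b.rOut (tsupport φ) :=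
    closure_minimal hsupp isClosed_cthickening
  exact ⟨b.hasCompactSupport_normed.contDiff_convolution_left _ b.contDiff_normed
    hφ.locallyIntegrable, hc.isCompact.cthickening.of_isClosed_subset (isClosed_tsupport _) htsupp,
    htsupp.trans hs⟩

lemma fderiv_normed_convolution (b : ContDiffBump (0 : EuclideanSpace ℝ (Fin N)))
    (hφ : ContDiff ℝ 1 φ) (hc : HasCompactSupport φ) (x : EuclideanSpace ℝ (Fin N)) :
    fderiv ℝ (b.normed volume ⋆[ContinuousLinearMap.lsmul ℝ ℝ, volume] φ) x =
      (b.normed volume ⋆[ContinuousLinearMap.lsmul ℝ ℝ, volume] fderiv ℝ φ) x :=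
  (hc.hasFDerivAt_convolution_right (ContinuousLinearMap.lsmul ℝ ℝ)
    (b.contDiff_normed (n := 0)).continuous.locallyIntegrable hφ x).fderiv

lemma exists_isTestFun_dist_le (hΩ : IsOpen Ω) (hφ : ContDiff ℝ 1 φ) (hc : HasCompactSupport φ)
    (hs : tsupport φ ⊆ Ω) {ε : ℝ} (hε : 0 < ε) :
    ∃ ψ, IsTestFun Ω ψ ∧ ∀ x, dist (ψ x) (φ x) ≤ ε ∧ dist (fderiv ℝ ψ x) (fderiv ℝ φ x) ≤ ε := by
  have hφ' : Continuous (fderiv ℝ φ) := hφ.continuous_fderiv one_ne_zero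
  obtain ⟨δ₀, hδ₀, hthick⟩ := hc.isCompact.exists_cthickening_subset_open hΩ hs
  obtain ⟨δ₁, hδ₁, hunif⟩ :=
    uniformContinuous_iff.1 (hc.uniformContinuous_of_continuous hφ.continuous) ε hε
  obtain ⟨δ₂, hδ₂, hunif'⟩ :=
    uniformContinuous_iff.1 ((hc.fderiv ℝ).uniformContinuous_of_continuous hφ') ε hε
  obtain ⟨δ, hδ, hδmin⟩ := exists_between (show 0 < min δ₀ (min δ₁ δ₂) by positivity)
  obtain ⟨hlt₀, hlt₁, hlt₂⟩ : δ < δ₀ ∧ δ < δ₁ ∧ δ < δ₂ := by simpa only [lt_min_iff] using hδmin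
  let b : ContDiffBump (0 : EuclideanSpace ℝ (Fin N)) :=
    ⟨δ / 2, δ, half_pos hδ, half_lt_self hδ⟩
  refine ⟨b.normed volume ⋆[ContinuousLinearMap.lsmul ℝ ℝ, volume] φ,
    isTestFun_normed_convolution b hφ.continuous hc
      ((cthickening_mono hlt₀.le _).trans hthick), fun x => ⟨?_, ?_⟩⟩
  · exact b.dist_normed_convolution_le hφ.continuous.aestronglyMeasurable
      fun y hy => (hunif ((mem_ball.1 hy).trans hlt₁)).le
  · rw [fderiv_normed_convolution b hφ hc]
    exact b.dist_normed_convolution_le hφ'.aestronglyMeasurable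
      fun y hy => (hunif' ((mem_ball.1 hy).trans hlt₂)).le

end Mollification

lemma tendsto_integral_mul_sq {α : Type*} [MeasurableSpace α] {μ : Measure α} {ω g : α → ℝ}
    {f : ℕ → α → ℝ} {C : ℝ} (hω : Integrable ω μ) (hf : ∀ n, AEStronglyMeasurable (f n) μ)
    (hC : ∀ n x, ‖f n x‖ ≤ C) (hlim : ∀ x, Tendsto (fun n => f n x) atTop (𝓝 (g x))) :
    Tendsto (fun n => ∫ x, ω x * f n x ^ 2 ∂μ) atTop (𝓝 (∫ x, ω x * g x ^ 2 ∂μ)) := by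
  refine tendsto_integral_of_dominated_convergence (fun x => ‖ω x‖ * C ^ 2)
    (fun n => hω.aestronglyMeasurable.mul ((hf n).pow 2)) (hω.norm.mul_const _)
    (fun n => .of_forall fun x => ?_) (.of_forall fun x => ((hlim x).pow 2).const_mul _)
  rw [norm_mul, norm_pow]
  gcongr
  exact hC n x

lemma norm_le_add_one_of_dist_le {F : Type*} [SeminormedAddCommGroup F] {a b : F} {ε C : ℝ}
    (hb : ‖b‖ ≤ C) (h : dist a b ≤ ε) (hε : ε ≤ 1) : ‖a‖ ≤ C + 1 := by
  have := norm_le_norm_add_norm_sub' a b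
  rw [← dist_eq_norm] at this
  linarith

section Stability

variable {N : ℕ} {Ω : Set (EuclideanSpace ℝ (Fin N))} {u v φ : EuclideanSpace ℝ (Fin N) → ℝ}
  {p θ lam gam : ℝ}

/-- The weight `ω = (v+1)^((p-1)/2) (u+1)^((θ-1)/2)` of the stability inequality. -/
def stabilityWeight (p θ : ℝ) (u v : EuclideanSpace ℝ (Fin N) → ℝ)
    (x : EuclideanSpace ℝ (Fin N)) : ℝ :=
  (v x + 1) ^ ((p - 1) / 2) * (u x + 1) ^ ((θ - 1) / 2)

theorem sqrt_mul_setIntegral_stabilityWeight_le (hΩ : IsOpen Ω) (hΩb : Bornology.IsBounded Ω)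
    (hst : IsStable Ω lam gam p θ u v) (hω : IntegrableOn (stabilityWeight p θ u v) Ω)
    (hφ : ContDiff ℝ 1 φ) (hc : HasCompactSupport φ) (hs : tsupport φ ⊆ Ω) :
    √(lam * gam * p * θ) * ∫ x in Ω, stabilityWeight p θ u v x * φ x ^ 2 ≤
      ∫ x in Ω, ‖gradient φ x‖ ^ 2 := by
  obtain ⟨ε, -, hε, hεlim⟩ := exists_seq_strictAnti_tendsto' (zero_lt_one' ℝ)
  choose ψ hψ hψφ using fun n => exists_isTestFun_dist_le hΩ hφ hc hs (hε n).1
  have hlim (x) : Tendsto (fun n => ψ n x) atTop (𝓝 (φ x)) :=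
    tendsto_iff_dist_tendsto_zero.2
      (squeeze_zero (fun _ => dist_nonneg) (fun n => (hψφ n x).1) hεlim)
  have hlim' (x) : Tendsto (fun n => ‖fderiv ℝ (ψ n) x‖) atTop (𝓝 ‖fderiv ℝ φ x‖) :=
    (tendsto_iff_dist_tendsto_zero.2
      (squeeze_zero (fun _ => dist_nonneg) (fun n => (hψφ n x).2) hεlim)).norm
  obtain ⟨B, hB⟩ := hφ.continuous.bounded_above_of_compact_support hc
  obtain ⟨B', hB'⟩ :=
    (hφ.continuous_fderiv one_ne_zero).bounded_above_of_compact_support (hc.fderiv ℝ)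
  have hleft := tendsto_integral_mul_sq hω
    (fun n => (hψ n).1.continuous.aestronglyMeasurable)
    (fun n x => norm_le_add_one_of_dist_le (hB x) (hψφ n x).1 (hε n).2.le) hlim
  have hright := tendsto_integral_mul_sq (ω := fun _ => (1 : ℝ)) (μ := volume.restrict Ω)
    (integrableOn_const hΩb.measure_lt_top.ne)
    (fun n => ((hψ n).1.continuous_fderiv (by simp)).norm.aestronglyMeasurable)
    (fun n x => (norm_norm _).trans_le
      (norm_le_add_one_of_dist_le (hB' x) (hψφ n x).2 (hε n).2.le)) hlim'
  have hnorm (f : EuclideanSpace ℝ (Fin N) → ℝ) (x) : ‖gradient f x‖ = ‖fderiv ℝ f x‖ := by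
    simp [gradient]
  simp only [one_mul, ← hnorm] at hright
  exact le_of_tendsto_of_tendsto' (hleft.const_mul _) hright fun n => hst (ψ n) (hψ n)

end Stability

/-! ### Gaussian means and the linear sup estimate -/

section Gauss

variable {N : ℕ} {i : Fin N} {W f h : EuclideanSpace ℝ (Fin N) → ℝ}

/-- The unnormalised standard Gaussian density. -/
def gauss (z : EuclideanSpace ℝ (Fin N)) : ℝ := Real.exp (-(1 / 2) * ‖z‖ ^ 2)

/-- The unnormalised Gaussian mean of `W` around `x` with standard deviation `τ`: up to a constant,
the value at `x` of the heat flow started from `W`, at time `τ² / 2`. -/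
def gaussMean (W : EuclideanSpace ℝ (Fin N) → ℝ) (x : EuclideanSpace ℝ (Fin N)) (τ : ℝ) : ℝ :=
  ∫ z, gauss z * W (x + τ • z)

lemma gauss_pos (z : EuclideanSpace ℝ (Fin N)) : 0 < gauss z := Real.exp_pos _

lemma gauss_le_one (z : EuclideanSpace ℝ (Fin N)) : gauss z ≤ 1 :=
  Real.exp_le_one_iff.2 (by nlinarith [sq_nonneg ‖z‖])

lemma continuous_gauss : Continuous (gauss (N := N)) := by
  unfold gauss
  fun_prop

lemma integrable_exp_neg_mul_sq_norm {b : ℝ} (hb : 0 < b) :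
    Integrable (fun z : EuclideanSpace ℝ (Fin N) => Real.exp (-b * ‖z‖ ^ 2)) := by
  refine .of_integral_ne_zero ?_
  rw [GaussianFourier.integral_rexp_neg_mul_sq_norm hb]
  positivity

lemma integrable_gauss : Integrable (gauss (N := N)) := integrable_exp_neg_mul_sq_norm (by norm_num)

lemma integral_gauss_pos : 0 < ∫ z : EuclideanSpace ℝ (Fin N), gauss z := by
  unfold gauss
  rw [GaussianFourier.integral_rexp_neg_mul_sq_norm (by norm_num)]
  positivity

lemma norm_mul_gauss_le (z : EuclideanSpace ℝ (Fin N)) :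
    ‖z‖ * gauss z ≤ Real.exp (-(1 / 4) * ‖z‖ ^ 2) := by
  have hz : ‖z‖ ≤ Real.exp ((1 / 4) * ‖z‖ ^ 2) := by
    nlinarith [Real.add_one_le_exp ((1 / 4) * ‖z‖ ^ 2), sq_nonneg (‖z‖ / 2 - 1)]
  calc ‖z‖ * gauss z ≤ Real.exp ((1 / 4) * ‖z‖ ^ 2) * gauss z := by
        gcongr
        exact (gauss_pos z).le
    _ = Real.exp (-(1 / 4) * ‖z‖ ^ 2) := by
        rw [gauss, ← Real.exp_add]
        ring_nf

lemma integrable_norm_mul_gauss :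
    Integrable (fun z : EuclideanSpace ℝ (Fin N) => ‖z‖ * gauss z) := by
  refine (integrable_exp_neg_mul_sq_norm (b := 1 / 4) (by norm_num)).mono'
    (continuous_norm.mul continuous_gauss).aestronglyMeasurable (.of_forall fun z => ?_)
  rw [Real.norm_of_nonneg (mul_nonneg (norm_nonneg _) (gauss_pos z).le)]
  exact norm_mul_gauss_le z

lemma integrable_coord_mul_gauss :
    Integrable (fun z : EuclideanSpace ℝ (Fin N) => z i * gauss z) := by
  refine integrable_norm_mul_gauss.mono' (Continuous.aestronglyMeasurable
    ((by fun_prop : Continuous fun z : EuclideanSpace ℝ (Fin N) => z i).mul continuous_gauss))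
    (.of_forall fun z => ?_)
  rw [norm_mul, Real.norm_of_nonneg (gauss_pos z).le]
  exact mul_le_mul_of_nonneg_right (PiLp.norm_apply_le z i) (gauss_pos z).le

lemma hasFDerivAt_gauss (z : EuclideanSpace ℝ (Fin N)) :
    HasFDerivAt gauss (gauss z • (-(1 / 2) : ℝ) • 2 • innerSL ℝ z) z :=
  ((hasStrictFDerivAt_norm_sq z).hasFDerivAt.const_mul (-(1 / 2) : ℝ)).exp

lemma partialDeriv_gauss (z : EuclideanSpace ℝ (Fin N)) :
    partialDeriv i gauss z = -(z i * gauss z) := by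
  rw [partialDeriv, (hasFDerivAt_gauss z).fderiv]
  simp [EuclideanSpace.inner_single_right]
  ring

/-- Stein's identity. -/
lemma integral_mul_coord_mul_gauss {B B' : ℝ} (hh : ContDiff ℝ 1 h) (hB : ∀ z, ‖h z‖ ≤ B)
    (hB' : ∀ z, ‖partialDeriv i h z‖ ≤ B') :
    ∫ z, h z * (z i * gauss z) = ∫ z, partialDeriv i h z * gauss z := by
  have hint : Integrable fun z => h z * gauss z :=
    integrable_gauss.bdd_mul hh.continuous.aestronglyMeasurable (.of_forall hB)
  have hint' : Integrable fun z => partialDeriv i h z * gauss z :=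
    integrable_gauss.bdd_mul (continuous_partialDeriv hh).aestronglyMeasurable (.of_forall hB')
  have hintc : Integrable fun z => h z * partialDeriv i gauss z := by
    simp only [partialDeriv_gauss]
    exact integrable_coord_mul_gauss.neg.bdd_mul hh.continuous.aestronglyMeasurable (.of_forall hB)
  have hparts : ∫ z, h z * partialDeriv i gauss z = -∫ z, partialDeriv i h z * gauss z :=
    integral_mul_fderiv_eq_neg_fderiv_mul_of_integrable hint' hintc hint
      (fun z _ => hh.differentiable one_ne_zero z)
      (fun z _ => (hasFDerivAt_gauss z).differentiableAt)
  rw [← neg_inj, ← hparts, ← integral_neg]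
  simp only [partialDeriv_gauss, mul_neg]

lemma partialDeriv_comp_add_smul {x z : EuclideanSpace ℝ (Fin N)} {τ : ℝ}
    (hh : DifferentiableAt ℝ h (x + τ • z)) :
    partialDeriv i (fun z => h (x + τ • z)) z = τ * partialDeriv i h (x + τ • z) := by
  have haffine : HasFDerivAt (fun z : EuclideanSpace ℝ (Fin N) => x + τ • z)
      (τ • ContinuousLinearMap.id ℝ (EuclideanSpace ℝ (Fin N))) z :=
    ((hasFDerivAt_id z).const_smul τ).const_add x
  have hcomp : HasFDerivAt (fun z => h (x + τ • z)) _ z := hh.hasFDerivAt.comp z haffine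
  rw [partialDeriv, hcomp.fderiv]
  simp [partialDeriv]

lemma fderiv_apply_eq_sum (w : EuclideanSpace ℝ (Fin N) → ℝ) (y z : EuclideanSpace ℝ (Fin N)) :
    fderiv ℝ w y z = ∑ i, z i * partialDeriv i w y := by
  have hz : z = ∑ i, z i • (EuclideanSpace.single i (1 : ℝ)) := by
    simpa using ((EuclideanSpace.basisFun (Fin N) ℝ).sum_repr z).symm
  conv_lhs => rw [hz]
  simp [partialDeriv]

lemma continuous_add_smul (x : EuclideanSpace ℝ (Fin N)) (τ : ℝ) :
    Continuous fun z : EuclideanSpace ℝ (Fin N) => x + τ • z := by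
  fun_prop

lemma integrable_gauss_mul_comp (hh : Continuous h) (hc : HasCompactSupport h)
    (x : EuclideanSpace ℝ (Fin N)) (τ : ℝ) : Integrable fun z => gauss z * h (x + τ • z) := by
  obtain ⟨B, hB⟩ := hh.bounded_above_of_compact_support hc
  exact integrable_gauss.mul_bdd (hh.comp (continuous_add_smul x τ)).aestronglyMeasurable
    (.of_forall fun z => hB _)

lemma contDiff_partialDeriv (hW : ContDiff ℝ 2 W) : ContDiff ℝ 1 (partialDeriv i W) :=
  contDiff_iff_contDiffAt.2 fun _ => contDiffAt_partialDeriv hW.contDiffAt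

lemma hasCompactSupport_partialDeriv (hc : HasCompactSupport W) :
    HasCompactSupport (partialDeriv i W) :=
  hc.mono' (subset_closure.trans (tsupport_partialDeriv_subset W))

lemma continuous_lap (hW : ContDiff ℝ 2 W) : Continuous (lap W) :=
  continuous_finsetSum _ fun _ _ => continuous_partialDeriv (contDiff_partialDeriv hW)

lemma hasCompactSupport_lap (hc : HasCompactSupport W) : HasCompactSupport (lap W) := by
  refine .intro hc fun y hy => ?_
  rw [lap_eq_sum_partialDeriv]
  exact Finset.sum_eq_zero fun i _ => image_eq_zero_of_notMem_tsupport fun h =>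
    hy (tsupport_partialDeriv_subset W (tsupport_partialDeriv_subset (partialDeriv i W) h))

lemma integral_partialDeriv_comp_mul_coord_mul_gauss (hW : ContDiff ℝ 2 W)
    (hc : HasCompactSupport W) (x : EuclideanSpace ℝ (Fin N)) (τ : ℝ) :
    ∫ z, partialDeriv i W (x + τ • z) * (z i * gauss z) =
      τ * ∫ z, gauss z * partialDeriv i (partialDeriv i W) (x + τ • z) := by
  have hd : ContDiff ℝ 1 (partialDeriv i W) := contDiff_partialDeriv hW
  have hdc : HasCompactSupport (partialDeriv i W) := hasCompactSupport_partialDeriv hc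
  obtain ⟨B, hB⟩ := hd.continuous.bounded_above_of_compact_support hdc
  obtain ⟨B', hB'⟩ := (continuous_partialDeriv (i := i) hd).bounded_above_of_compact_support
    (hasCompactSupport_partialDeriv hdc)
  have hd₂ (z : EuclideanSpace ℝ (Fin N)) :
      partialDeriv i (fun z => partialDeriv i W (x + τ • z)) z =
        τ * partialDeriv i (partialDeriv i W) (x + τ • z) :=
    partialDeriv_comp_add_smul (hd.differentiable one_ne_zero _)
  rw [integral_mul_coord_mul_gauss (h := fun z => partialDeriv i W (x + τ • z)) (B := B)
    (B' := |τ| * B') (hd.comp (by fun_prop)) (fun z => hB _) fun z => ?_]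
  · simp only [hd₂, ← integral_const_mul]
    congr 1 with z
    ring
  · rw [hd₂, norm_mul, Real.norm_eq_abs τ]
    gcongr
    exact hB' _

lemma integral_gauss_mul_fderiv (hW : ContDiff ℝ 2 W) (hc : HasCompactSupport W)
    (x : EuclideanSpace ℝ (Fin N)) (τ : ℝ) :
    ∫ z, gauss z * fderiv ℝ W (x + τ • z) z = τ * gaussMean (lap W) x τ := by
  have hd (i : Fin N) : ContDiff ℝ 1 (partialDeriv i W) := contDiff_partialDeriv hW
  have hdc (i : Fin N) : HasCompactSupport (partialDeriv i W) := hasCompactSupport_partialDeriv hc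
  have hint (i : Fin N) : Integrable fun z => partialDeriv i W (x + τ • z) * (z i * gauss z) := by
    obtain ⟨B, hB⟩ := (hd i).continuous.bounded_above_of_compact_support (hdc i)
    exact integrable_coord_mul_gauss.bdd_mul ((hd i).continuous.comp
      (continuous_add_smul x τ)).aestronglyMeasurable (.of_forall fun z => hB _)
  calc ∫ z, gauss z * fderiv ℝ W (x + τ • z) z
      = ∫ z, ∑ i, partialDeriv i W (x + τ • z) * (z i * gauss z) := by
        congr 1 with z
        rw [fderiv_apply_eq_sum, Finset.mul_sum]
        exact Finset.sum_congr rfl fun i _ => by ring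
    _ = τ * ∑ i, ∫ z, gauss z * partialDeriv i (partialDeriv i W) (x + τ • z) := by
        rw [integral_finsetSum _ fun i _ => hint i, Finset.mul_sum]
        exact Finset.sum_congr rfl fun i _ =>
          integral_partialDeriv_comp_mul_coord_mul_gauss hW hc x τ
    _ = τ * gaussMean (lap W) x τ := by
        rw [← integral_finsetSum _ fun i _ => integrable_gauss_mul_comp
          (continuous_partialDeriv (hd i)) (hasCompactSupport_partialDeriv (hdc i)) x τ]
        simp only [gaussMean, lap_eq_sum_partialDeriv, Finset.mul_sum]

theorem hasDerivAt_gaussMean (hW : ContDiff ℝ 2 W) (hc : HasCompactSupport W)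
    (x : EuclideanSpace ℝ (Fin N)) (τ : ℝ) :
    HasDerivAt (gaussMean W x) (τ * gaussMean (lap W) x τ) τ := by
  rw [← integral_gauss_mul_fderiv hW hc]
  have hW' : Continuous (fderiv ℝ W) := hW.continuous_fderiv two_ne_zero
  obtain ⟨B, hB⟩ := hW'.bounded_above_of_compact_support (hc.fderiv ℝ)
  refine (hasDerivAt_integral_of_dominated_loc_of_deriv_le (s := univ)
    (F := fun τ z => gauss z * W (x + τ • z))
    (F' := fun τ z => gauss z * fderiv ℝ W (x + τ • z) z)
    (bound := fun z => B * (‖z‖ * gauss z)) univ_mem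
    (.of_forall fun t => (integrable_gauss_mul_comp hW.continuous hc x t).aestronglyMeasurable)
    (integrable_gauss_mul_comp hW.continuous hc x τ)
    (continuous_gauss.mul ((hW'.comp (continuous_add_smul x τ)).clm_apply
      continuous_id)).aestronglyMeasurable
    (.of_forall fun z t _ => ?_) (integrable_norm_mul_gauss.const_mul B)
    (.of_forall fun z t _ => ?_)).2
  · calc ‖gauss z * fderiv ℝ W (x + t • z) z‖ = gauss z * ‖fderiv ℝ W (x + t • z) z‖ := by
          rw [norm_mul, Real.norm_of_nonneg (gauss_pos z).le]
      _ ≤ gauss z * (B * ‖z‖) := by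
          gcongr
          · exact (gauss_pos z).le
          · exact (fderiv ℝ W (x + t • z)).le_of_opNorm_le (hB _) z
      _ = B * (‖z‖ * gauss z) := by ring
  · have hline : HasDerivAt (fun t : ℝ => x + t • z) z t := by
      simpa using ((hasDerivAt_id t).smul_const z).const_add x
    exact ((hW.differentiable two_ne_zero _).hasFDerivAt.comp_hasDerivAt t hline).const_mul _

lemma gaussMean_zero (W : EuclideanSpace ℝ (Fin N) → ℝ) (x : EuclideanSpace ℝ (Fin N)) :
    gaussMean W x 0 = (∫ z : EuclideanSpace ℝ (Fin N), gauss z) * W x := by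
  simp only [gaussMean, zero_smul, add_zero, integral_mul_const]

lemma gaussMean_one_le (hW : Integrable W) (hW₀ : 0 ≤ W) (x : EuclideanSpace ℝ (Fin N)) :
    gaussMean W x 1 ≤ ∫ z, W z := by
  rw [← integral_add_left_eq_self W x]
  refine integral_mono_of_nonneg (.of_forall fun z => mul_nonneg (gauss_pos z).le (hW₀ _))
    (hW.comp_add_left x) (.of_forall fun z => ?_)
  simpa using mul_le_of_le_one_left (hW₀ _) (gauss_le_one z)

lemma memLp_gauss {q : ℝ} (hq : 0 < q) :
    MemLp (gauss (N := N)) (ENNReal.ofReal q) := by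
  rw [← integrable_norm_rpow_iff continuous_gauss.aestronglyMeasurable (by simpa using hq)
    ENNReal.ofReal_ne_top, ENNReal.toReal_ofReal hq.le]
  refine (integrable_exp_neg_mul_sq_norm (half_pos hq)).congr (.of_forall fun z => ?_)
  simp only [Real.norm_of_nonneg (gauss_pos z).le]
  rw [gauss, ← Real.exp_mul]
  ring_nf

lemma memLp_comp_add_smul {q : ENNReal} (hf : MemLp f q) (x : EuclideanSpace ℝ (Fin N)) {τ : ℝ}
    (hτ : τ ≠ 0) : MemLp (fun z => f (x + τ • z)) q := by
  have hadd : MemLp (fun z => f (x + z)) q :=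
    hf.comp_measurePreserving (measurePreserving_add_left volume x)
  have hmap : MemLp (fun z => f (x + z)) q (Measure.map (τ • ·) volume) := by
    rw [Measure.map_addHaar_smul volume hτ]
    exact hadd.smul_measure ENNReal.ofReal_ne_top
  exact hmap.comp_of_map (measurable_const_smul τ).aemeasurable

lemma integral_comp_add_smul (f : EuclideanSpace ℝ (Fin N) → ℝ) (x : EuclideanSpace ℝ (Fin N))
    {τ : ℝ} (hτ : 0 ≤ τ) : ∫ z, f (x + τ • z) = (τ ^ N)⁻¹ * ∫ z, f z := by
  rw [Measure.integral_comp_smul_of_nonneg volume (fun z => f (x + z)) τ (hR := hτ),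
    integral_add_left_eq_self]
  simp

lemma integrable_gauss_mul_comp_of_memLp {r : ℝ} (hr : 1 < r)
    (hf : MemLp f (ENNReal.ofReal r)) (x : EuclideanSpace ℝ (Fin N)) {τ : ℝ} (hτ : τ ≠ 0) :
    Integrable fun z => gauss z * f (x + τ • z) := by
  have hconj := Real.HolderConjugate.conjExponent hr
  have : ENNReal.HolderConjugate (ENNReal.ofReal r.conjExponent) (ENNReal.ofReal r) :=
    hconj.symm.ennrealOfReal
  exact (memLp_gauss hconj.symm.pos).integrable_mul (memLp_comp_add_smul hf x hτ)

theorem exists_gaussMean_le {r : ℝ} (hr : 1 < r) : ∃ κ : ℝ, 0 ≤ κ ∧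
    ∀ f : EuclideanSpace ℝ (Fin N) → ℝ, MemLp f (ENNReal.ofReal r) → 0 ≤ f → ∀ x, ∀ τ, 0 < τ →
      gaussMean f x τ ≤ κ * (∫ z, f z ^ r) ^ (1 / r) * τ ^ (-(N : ℝ) / r) := by
  have hconj := (Real.HolderConjugate.conjExponent hr).symm
  set q := r.conjExponent
  refine ⟨(∫ z : EuclideanSpace ℝ (Fin N), gauss z ^ q) ^ (1 / q), Real.rpow_nonneg
    (integral_nonneg fun z => Real.rpow_nonneg (gauss_pos z).le _) _, fun f hf hf₀ x τ hτ => ?_⟩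
  have hI : 0 ≤ ∫ z, f z ^ r := integral_nonneg fun z => Real.rpow_nonneg (hf₀ z) _
  calc gaussMean f x τ
      ≤ (∫ z : EuclideanSpace ℝ (Fin N), gauss z ^ q) ^ (1 / q) *
          (∫ z, f (x + τ • z) ^ r) ^ (1 / r) :=
        integral_mul_le_Lp_mul_Lq_of_nonneg hconj (.of_forall fun z => (gauss_pos z).le)
          (.of_forall fun z => hf₀ (x + τ • z)) (memLp_gauss hconj.pos)
          (memLp_comp_add_smul hf x hτ.ne')
    _ = _ := by
        rw [integral_comp_add_smul (fun z => f z ^ r) x hτ.le,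
          Real.mul_rpow (by positivity) hI, ← Real.rpow_natCast, ← Real.rpow_neg hτ.le,
          ← Real.rpow_mul hτ.le]
        ring_nf

lemma neg_gaussMean_le_gaussMean_lap {r : ℝ} (hW : ContDiff ℝ 2 W) (hc : HasCompactSupport W)
    (hr : 1 < r) (hf : MemLp f (ENNReal.ofReal r)) (hle : -lap W ≤ f)
    (x : EuclideanSpace ℝ (Fin N)) {τ : ℝ} (hτ : τ ≠ 0) :
    -gaussMean f x τ ≤ gaussMean (lap W) x τ := by
  rw [gaussMean, ← integral_neg]
  refine integral_mono (integrable_gauss_mul_comp_of_memLp hr hf x hτ).neg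
    (integrable_gauss_mul_comp (continuous_lap hW) (hasCompactSupport_lap hc) x τ) fun z => ?_
  have := mul_le_mul_of_nonneg_left (hle (x + τ • z)) (gauss_pos z).le
  simp only [Pi.neg_apply] at this ⊢
  linarith

lemma monotoneOn_gaussMean_add_rpow {A b : ℝ} (hb : 0 < b) (hW : ContDiff ℝ 2 W)
    (hc : HasCompactSupport W) (x : EuclideanSpace ℝ (Fin N))
    (h : ∀ τ > 0, -(A * τ ^ (b - 2)) ≤ gaussMean (lap W) x τ) :
    MonotoneOn (fun τ => gaussMean W x τ + A / b * τ ^ b) (Ici 0) := by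
  have hd (τ : ℝ) (hτ : 0 < τ) : HasDerivAt (fun τ => gaussMean W x τ + A / b * τ ^ b)
      (τ * (gaussMean (lap W) x τ + A * τ ^ (b - 2))) τ := by
    refine ((hasDerivAt_gaussMean hW hc x τ).add
      ((Real.hasDerivAt_rpow_const (.inl hτ.ne')).const_mul (A / b))).congr_deriv ?_
    rw [show b - 1 = 1 + (b - 2) by ring, Real.rpow_add hτ, Real.rpow_one]
    field_simp
  refine monotoneOn_of_deriv_nonneg (convex_Ici 0) (Continuous.continuousOn ?_) ?_ ?_
  · exact (continuous_iff_continuousAt.2 fun τ => (hasDerivAt_gaussMean hW hc x τ).continuousAt).add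
      (continuous_const.mul (continuous_id.rpow_const fun _ => .inr hb.le))
  all_goals
    intro τ hτ
    rw [interior_Ici, mem_Ioi] at hτ
  · exact (hd τ hτ).differentiableAt.differentiableWithinAt
  · rw [(hd τ hτ).deriv]
    exact mul_nonneg hτ.le (by linarith [h τ hτ])

theorem exists_forall_le_integral_add_rpow {r : ℝ} (hr : 1 < r) (hN : (N : ℝ) < 2 * r) :
    ∃ C, 0 < C ∧ ∀ W f : EuclideanSpace ℝ (Fin N) → ℝ, ContDiff ℝ 2 W → HasCompactSupport W →
      0 ≤ W → MemLp f (ENNReal.ofReal r) → 0 ≤ f → -lap W ≤ f →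
      ∀ x, W x ≤ C * ((∫ z, W z) + (∫ z, f z ^ r) ^ (1 / r)) := by
  obtain ⟨κ, hκ₀, hκ⟩ := exists_gaussMean_le (N := N) hr
  set g := ∫ z : EuclideanSpace ℝ (Fin N), gauss z
  have hg : 0 < g := integral_gauss_pos
  have hb : 0 < 2 - N / r := by
    rw [sub_pos, div_lt_iff₀ (by linarith)]
    exact hN
  set b := 2 - N / r
  refine ⟨(1 + κ / b) / g, by positivity, fun W f hW hc hW₀ hf hf₀ hle x => ?_⟩
  set F := (∫ z, f z ^ r) ^ (1 / r)
  have hlap (τ : ℝ) (hτ : 0 < τ) : -(κ * F * τ ^ (b - 2)) ≤ gaussMean (lap W) x τ := by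
    refine le_trans (neg_le_neg ?_) (neg_gaussMean_le_gaussMean_lap hW hc hr hf hle x hτ.ne')
    rw [show b - 2 = -(N : ℝ) / r by ring]
    exact hκ f hf hf₀ x τ hτ
  have hF : 0 ≤ F := Real.rpow_nonneg (integral_nonneg fun z => Real.rpow_nonneg (hf₀ z) _) _
  have hI : 0 ≤ ∫ z, W z := integral_nonneg hW₀
  have hmean : g * W x ≤ (∫ z, W z) + κ / b * F := by
    have h₀₁ := monotoneOn_gaussMean_add_rpow hb hW hc x hlap
      self_mem_Ici (mem_Ici.2 zero_le_one) zero_le_one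
    simp only [gaussMean_zero, Real.zero_rpow hb.ne', mul_zero, add_zero, Real.one_rpow,
      mul_one] at h₀₁
    have h₁ := gaussMean_one_le (hW.continuous.integrable_of_hasCompactSupport hc) hW₀ x
    linarith [show κ * F / b = κ / b * F by ring]
  rw [div_mul_eq_mul_div, le_div_iff₀ hg]
  have := mul_nonneg (div_nonneg hκ₀ hb.le) hI
  linarith

end Gauss

/-! ### Truncated powers -/

section TruncPow

variable {m t : ℝ} {g : ℝ → ℝ}

/-- The derivative of `truncPow m`: the derivative of `t ↦ (t + 1) ^ m`, smoothly cut off to vanish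
for `t ≤ 1` and unchanged for `t ≥ 2`. -/
def truncPowDeriv (m t : ℝ) : ℝ := m * (t + 1) ^ (m - 1) * smoothTransition (t - 1)

/-- A smooth truncation of the power `t ↦ (t + 1) ^ m` that vanishes near `0`, so that its
composition with a function of zero boundary values is compactly supported. -/
def truncPow (m t : ℝ) : ℝ := ∫ τ in 0..t, truncPowDeriv m τ

/-- The energy density of `truncPow m`: the primitive of the square of its derivative. -/
def truncPowEnergy (m t : ℝ) : ℝ := ∫ τ in 0..t, truncPowDeriv m τ ^ 2

lemma truncPowDeriv_of_le_one (ht : t ≤ 1) : truncPowDeriv m t = 0 := by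
  simp [truncPowDeriv, smoothTransition.zero_of_nonpos (sub_nonpos.2 ht)]

lemma truncPowDeriv_of_two_le (ht : 2 ≤ t) : truncPowDeriv m t = m * (t + 1) ^ (m - 1) := by
  rw [truncPowDeriv, smoothTransition.one_of_one_le (by linarith), mul_one]

lemma truncPowDeriv_nonneg (hm : 0 ≤ m) (ht : 0 ≤ t) : 0 ≤ truncPowDeriv m t := by
  have := smoothTransition.nonneg (t - 1)
  unfold truncPowDeriv
  positivity

lemma truncPowDeriv_le (hm : 0 ≤ m) (ht : 0 ≤ t) : truncPowDeriv m t ≤ m * (t + 1) ^ (m - 1) :=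
  mul_le_of_le_one_right (by positivity) (smoothTransition.le_one _)

lemma contDiff_truncPowDeriv {n : ℕ∞} : ContDiff ℝ n (truncPowDeriv m) := by
  refine contDiff_iff_contDiffAt.2 fun t => ?_
  rcases lt_or_ge t 1 with ht | ht
  · exact (contDiffAt_const (c := (0 : ℝ))).congr_of_eventuallyEq
      ((eventually_le_nhds ht).mono fun _ => truncPowDeriv_of_le_one)
  · exact (contDiffAt_const.mul ((contDiffAt_id.add contDiffAt_const).rpow_const_of_ne
      (by simp only [id_eq]; linarith))).mul
      (smoothTransition.contDiff.comp (contDiff_id.sub contDiff_const)).contDiffAt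

lemma continuous_truncPowDeriv : Continuous (truncPowDeriv m) :=
  (contDiff_truncPowDeriv (n := 0)).continuous

lemma hasDerivAt_truncPow (m t : ℝ) : HasDerivAt (truncPow m) (truncPowDeriv m t) t :=
  (continuous_truncPowDeriv.integral_hasStrictDerivAt 0 t).hasDerivAt

lemma hasDerivAt_truncPowEnergy (m t : ℝ) :
    HasDerivAt (truncPowEnergy m) (truncPowDeriv m t ^ 2) t :=
  ((continuous_truncPowDeriv.pow 2).integral_hasStrictDerivAt 0 t).hasDerivAt

lemma contDiff_truncPow : ContDiff ℝ 2 (truncPow m) := by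
  rw [show (2 : WithTop ℕ∞) = 1 + 1 by norm_num, contDiff_succ_iff_deriv,
    funext fun t => (hasDerivAt_truncPow m t).deriv]
  exact ⟨fun t => (hasDerivAt_truncPow m t).differentiableAt, by simp, contDiff_truncPowDeriv⟩

lemma contDiff_truncPowEnergy : ContDiff ℝ 1 (truncPowEnergy m) := by
  rw [contDiff_one_iff_deriv, funext fun t => (hasDerivAt_truncPowEnergy m t).deriv]
  exact ⟨fun t => (hasDerivAt_truncPowEnergy m t).differentiableAt, continuous_truncPowDeriv.pow 2⟩

lemma intervalIntegral_eventuallyEq_zero (hg : ∀ t ≤ 1, g t = 0) :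
    (fun t => ∫ τ in 0..t, g τ) =ᶠ[𝓝 0] 0 := by
  filter_upwards [Iio_mem_nhds one_pos] with t ht
  refine intervalIntegral.integral_zero_ae (.of_forall fun τ hτ => hg τ ?_)
  exact hτ.2.trans (max_le zero_le_one (le_of_lt ht))

lemma truncPow_eventuallyEq_zero : truncPow m =ᶠ[𝓝 0] 0 :=
  intervalIntegral_eventuallyEq_zero fun _ => truncPowDeriv_of_le_one

lemma truncPowEnergy_eventuallyEq_zero : truncPowEnergy m =ᶠ[𝓝 0] 0 :=
  intervalIntegral_eventuallyEq_zero fun t ht => by simp [truncPowDeriv_of_le_one ht]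

lemma hasDerivAt_add_one_rpow (m : ℝ) (ht : -1 < t) :
    HasDerivAt (fun t => (t + 1) ^ m) (m * (t + 1) ^ (m - 1)) t := by
  simpa using ((hasDerivAt_id t).add_const (1 : ℝ)).rpow_const (p := m)
    (.inl (by simp only [id_eq]; linarith))

lemma intervalIntegrable_add_one_rpow {a : ℝ} (m : ℝ) (ha : 0 ≤ a) (hat : a ≤ t) :
    IntervalIntegrable (fun τ => m * (τ + 1) ^ (m - 1)) volume a t := by
  refine ContinuousOn.intervalIntegrable fun τ hτ => ContinuousAt.continuousWithinAt ?_
  rw [uIcc_of_le hat] at hτ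
  exact (hasDerivAt_add_one_rpow (m - 1) (by linarith [hτ.1])).continuousAt.const_mul m

lemma integral_add_one_rpow {a : ℝ} (m : ℝ) (ha : 0 ≤ a) (hat : a ≤ t) :
    ∫ τ in a..t, m * (τ + 1) ^ (m - 1) = (t + 1) ^ m - (a + 1) ^ m := by
  refine intervalIntegral.integral_eq_sub_of_hasDerivAt
    (f := fun τ => (τ + 1) ^ m) (fun τ hτ => ?_)
    (intervalIntegrable_add_one_rpow m ha hat)
  rw [uIcc_of_le hat] at hτ
  exact hasDerivAt_add_one_rpow m (by linarith [hτ.1])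

lemma truncPow_nonneg (hm : 0 ≤ m) (ht : 0 ≤ t) : 0 ≤ truncPow m t :=
  intervalIntegral.integral_nonneg ht fun _ hτ => truncPowDeriv_nonneg hm hτ.1

lemma truncPow_le (hm : 0 ≤ m) (ht : 0 ≤ t) : truncPow m t ≤ (t + 1) ^ m - 1 := by
  calc truncPow m t ≤ ∫ τ in 0..t, m * (τ + 1) ^ (m - 1) :=
        intervalIntegral.integral_mono_on ht (continuous_truncPowDeriv.intervalIntegrable _ _)
          (intervalIntegrable_add_one_rpow m le_rfl ht) fun τ hτ => truncPowDeriv_le hm hτ.1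
    _ = (t + 1) ^ m - 1 := by
        rw [integral_add_one_rpow m le_rfl ht, zero_add, Real.one_rpow]

lemma add_one_rpow_sub_le_truncPow (hm : 0 ≤ m) (ht : 0 ≤ t) :
    (t + 1) ^ m - 3 ^ m ≤ truncPow m t := by
  rcases le_total t 2 with h | h
  · have : (t + 1) ^ m ≤ 3 ^ m := Real.rpow_le_rpow (by linarith) (by linarith) hm
    linarith [truncPow_nonneg hm ht]
  · have hsplit : truncPow m t = truncPow m 2 + ∫ τ in 2..t, truncPowDeriv m τ :=
      (intervalIntegral.integral_add_adjacent_intervals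
        (continuous_truncPowDeriv.intervalIntegrable _ _)
        (continuous_truncPowDeriv.intervalIntegrable _ _)).symm
    have htail : ∫ τ in 2..t, truncPowDeriv m τ = (t + 1) ^ m - (2 + 1) ^ m := by
      rw [← integral_add_one_rpow m zero_le_two h]
      refine intervalIntegral.integral_congr fun τ hτ => truncPowDeriv_of_two_le ?_
      rw [uIcc_of_le h] at hτ
      exact hτ.1
    have := truncPow_nonneg hm zero_le_two
    norm_num at htail
    linarith

lemma truncPowEnergy_half_le (hm : 1 < m) (ht : 0 ≤ t) :
    truncPowEnergy (m / 2) t ≤ m ^ 2 / (4 * (m - 1)) * (t + 1) ^ (m - 1) := by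
  have hm₁ : 0 < m - 1 := by linarith
  have hm₂ : 0 ≤ m / 2 := by linarith
  have hsq (τ : ℝ) (hτ : 0 ≤ τ) : truncPowDeriv (m / 2) τ ^ 2 ≤
      m ^ 2 / (4 * (m - 1)) * ((m - 1) * (τ + 1) ^ (m - 1 - 1)) := by
    calc truncPowDeriv (m / 2) τ ^ 2 ≤ (m / 2 * (τ + 1) ^ (m / 2 - 1)) ^ 2 :=
          pow_le_pow_left₀ (truncPowDeriv_nonneg hm₂ hτ) (truncPowDeriv_le hm₂ hτ) 2
      _ = m ^ 2 / (4 * (m - 1)) * ((m - 1) * (τ + 1) ^ (m - 1 - 1)) := by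
          rw [mul_pow, ← Real.rpow_mul_natCast (by linarith),
            show (m / 2 - 1) * (2 : ℕ) = m - 1 - 1 by push_cast; ring]
          field_simp
          norm_num
  calc truncPowEnergy (m / 2) t
      ≤ ∫ τ in 0..t, m ^ 2 / (4 * (m - 1)) * ((m - 1) * (τ + 1) ^ (m - 1 - 1)) :=
        intervalIntegral.integral_mono_on ht
          ((continuous_truncPowDeriv.pow 2).intervalIntegrable _ _)
          ((intervalIntegrable_add_one_rpow _ le_rfl ht).const_mul _) fun τ hτ => hsq τ hτ.1
    _ = m ^ 2 / (4 * (m - 1)) * ((t + 1) ^ (m - 1) - 1) := by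
        rw [intervalIntegral.integral_const_mul, integral_add_one_rpow _ le_rfl ht, zero_add,
          Real.one_rpow]
    _ ≤ m ^ 2 / (4 * (m - 1)) * (t + 1) ^ (m - 1) := by
        gcongr
        linarith

lemma add_one_rpow_le_sq_truncPow_half {ε : ℝ} (hm : 0 ≤ m) (hε : 0 < ε) (ht : 0 ≤ t) :
    (t + 1) ^ m ≤ (1 + ε) * truncPow (m / 2) t ^ 2 + (1 + 1 / ε) * 3 ^ m := by
  have hsq (x : ℝ) (hx : 0 ≤ x) : x ^ m = (x ^ (m / 2)) ^ 2 := by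
    rw [← Real.rpow_mul_natCast hx]
    norm_num
  rw [hsq _ (by linarith), hsq 3 (by norm_num)]
  set a := truncPow (m / 2) t
  set b : ℝ := 3 ^ (m / 2)
  calc ((t + 1) ^ (m / 2)) ^ 2 ≤ (a + b) ^ 2 := by
        gcongr
        linarith [add_one_rpow_sub_le_truncPow ((div_nonneg hm zero_le_two)) ht]
    _ ≤ (a + b) ^ 2 + (ε * a - b) ^ 2 / ε := le_add_of_nonneg_right (by positivity)
    _ = (1 + ε) * a ^ 2 + (1 + 1 / ε) * b ^ 2 := by
        field_simp
        ring

lemma truncPowDeriv_one : truncPowDeriv 1 = fun t => smoothTransition (t - 1) := by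
  funext t
  simp [truncPowDeriv]

lemma monotone_truncPowDeriv_one : Monotone (truncPowDeriv 1) := by
  rw [truncPowDeriv_one]
  exact smoothTransition.monotone.comp fun _ _ h => sub_le_sub_right h 1

end TruncPow

/-! ### The sup bound for nonnegative functions with zero boundary values -/

section SupBound

variable {N : ℕ} {Ω : Set (EuclideanSpace ℝ (Fin N))} {w h : EuclideanSpace ℝ (Fin N) → ℝ}

lemma integrableOn_of_continuousOn_closure (hΩb : Bornology.IsBounded Ω)
    (hh : ContinuousOn h (closure Ω)) : IntegrableOn h Ω :=
  (hh.integrableOn_compact hΩb.isCompact_closure).mono_set subset_closure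

lemma memLp_indicator_of_continuousOn_closure (hΩ : IsOpen Ω) (hΩb : Bornology.IsBounded Ω)
    (hh : ContinuousOn h (closure Ω)) (q : ENNReal) : MemLp (Ω.indicator h) q := by
  rw [memLp_indicator_iff_restrict hΩ.measurableSet]
  have : IsFiniteMeasure (volume.restrict Ω) := ⟨by simpa using hΩb.measure_lt_top⟩
  obtain ⟨B, hB⟩ := hΩb.isCompact_closure.exists_bound_of_continuousOn hh
  exact MemLp.of_bound ((hh.mono subset_closure).aestronglyMeasurable hΩ.measurableSet) B
    (ae_restrict_of_forall_mem hΩ.measurableSet fun x hx => hB x (subset_closure hx))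

lemma IsPosDirichlet.neg_lap_indicator_truncPow_one_le (hw : IsPosDirichlet Ω w) (hΩ : IsOpen Ω)
    (hh₀ : ∀ x ∈ Ω, 0 ≤ h x) (hle : ∀ x ∈ Ω, -lap w x ≤ h x) :
    -lap (Ω.indicator fun y => truncPow 1 (w y)) ≤ Ω.indicator h := by
  intro x
  rw [Pi.neg_apply]
  by_cases hx : x ∈ Ω
  · have hg₁ : truncPowDeriv 1 (w x) ≤ 1 := by
      simpa using truncPowDeriv_le zero_le_one (hw.pos x hx).le
    have hg' : 0 ≤ deriv (truncPowDeriv 1) (w x) * ∑ i, partialDeriv i w x ^ 2 :=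
      mul_nonneg monotone_truncPowDeriv_one.deriv_nonneg (Finset.sum_nonneg fun i _ => sq_nonneg _)
    rw [indicator_of_mem hx, hw.lap_indicator_comp hΩ hx (hasDerivAt_truncPow 1)
      (((contDiff_truncPowDeriv (n := 1)).differentiable one_ne_zero _).hasDerivAt)]
    calc -(truncPowDeriv 1 (w x) * lap w x +
          deriv (truncPowDeriv 1) (w x) * ∑ i, partialDeriv i w x ^ 2)
        ≤ truncPowDeriv 1 (w x) * -lap w x := by linarith
      _ ≤ truncPowDeriv 1 (w x) * h x :=
        mul_le_mul_of_nonneg_left (hle x hx) (truncPowDeriv_nonneg zero_le_one (hw.pos x hx).le)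
      _ ≤ h x := mul_le_of_le_one_left (hh₀ x hx) hg₁
  · rw [indicator_of_notMem hx,
      lap_congr (hw.indicator_comp_eventuallyEq_zero hΩ truncPow_eventuallyEq_zero hx)]
    simp [lap]

theorem exists_forall_isPosDirichlet_le (hΩ : IsOpen Ω) (hΩb : Bornology.IsBounded Ω) {r : ℝ}
    (hr : 1 < r) (hN : (N : ℝ) < 2 * r) :
    ∃ C, 0 < C ∧ ∀ w h : EuclideanSpace ℝ (Fin N) → ℝ, IsPosDirichlet Ω w →
      ContinuousOn h (closure Ω) → (∀ x ∈ Ω, 0 ≤ h x) → (∀ x ∈ Ω, -lap w x ≤ h x) →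
      ∀ x ∈ Ω, w x ≤ 2 + C * ((∫ x in Ω, w x) + (∫ x in Ω, h x ^ r) ^ (1 / r)) := by
  obtain ⟨C, hC, hest⟩ := exists_forall_le_integral_add_rpow (N := N) hr hN
  refine ⟨C, hC, fun w h hw hh hh₀ hle x hx => ?_⟩
  set W := Ω.indicator fun y => truncPow 1 (w y)
  have hW : ContDiff ℝ 2 W :=
    hw.contDiff_indicator_comp hΩ le_rfl truncPow_eventuallyEq_zero contDiff_truncPow
  have hWc : HasCompactSupport W :=
    hw.hasCompactSupport_indicator_comp hΩ hΩb truncPow_eventuallyEq_zero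
  have hW₀ : 0 ≤ W := indicator_nonneg fun y hy => truncPow_nonneg zero_le_one (hw.pos y hy).le
  have hWx : w x - 2 ≤ W x := by
    have := add_one_rpow_sub_le_truncPow zero_le_one (hw.pos x hx).le
    simp only [Real.rpow_one] at this
    rw [show W x = truncPow 1 (w x) from indicator_of_mem hx _]
    linarith
  have hWint : ∫ y, W y ≤ ∫ y in Ω, w y := by
    rw [integral_indicator hΩ.measurableSet]
    refine setIntegral_mono_on (integrableOn_of_continuousOn_closure hΩb
      (contDiff_truncPow.continuous.comp_continuousOn hw.continuousOn))
      (integrableOn_of_continuousOn_closure hΩb hw.continuousOn) hΩ.measurableSet fun y hy => ?_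
    simpa using truncPow_le zero_le_one (hw.pos y hy).le
  have hhint : ∫ y, Ω.indicator h y ^ r = ∫ y in Ω, h y ^ r := by
    rw [← integral_indicator hΩ.measurableSet]
    congr 1 with y
    by_cases hy : y ∈ Ω <;> simp [hy, (zero_lt_one.trans hr).ne']
  have hsup := hest W (Ω.indicator h) hW hWc hW₀
    (memLp_indicator_of_continuousOn_closure hΩ hΩb hh _) (indicator_nonneg hh₀)
    (hw.neg_lap_indicator_truncPow_one_le hΩ hh₀ hle) x
  rw [hhint] at hsup
  have := mul_le_mul_of_nonneg_left hWint hC.le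
  linarith

end SupBound

/-! ### The integral estimate -/

lemma rpow_mul_rpow_sub_one_eq {U V p θ a b κ : ℝ} (hU : 0 < U) (hV : 0 < V)
    (hκa : a * κ = (θ + 1) / 2) (hκb : b * κ = (p + 1) / 2) :
    V ^ p * U ^ (a - 1) =
      V ^ ((p - 1) / 2) * U ^ ((θ - 1) / 2) * ((U ^ a) ^ (1 - κ) * (V ^ b) ^ κ) := by
  calc V ^ p * U ^ (a - 1)
      = V ^ ((p - 1) / 2 + b * κ) * U ^ ((θ - 1) / 2 + a * (1 - κ)) := by
        rw [hκb, mul_one_sub, hκa]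
        ring_nf
    _ = _ := by
        rw [Real.rpow_add hU, Real.rpow_add hV, Real.rpow_mul hU.le, Real.rpow_mul hV.le]
        ring

lemma exists_mul_rpow_add_mul_rpow_le {κ A B : ℝ} (hκ₀ : 0 < κ) (hκ₁ : κ ≤ 1) (hA : 0 < A)
    (hB : 0 < B) : ∃ μ, 0 < μ ∧ ∀ x y : ℝ, 0 ≤ x → 0 ≤ y →
      μ * (A * (x ^ (1 - κ) * y ^ κ)) + B * (y ^ (1 - κ) * x ^ κ) ≤ √(A * B) * (μ * x + y) := by
  set q := √(A * B)
  have hq : 0 < q := Real.sqrt_pos.2 (mul_pos hA hB)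
  have hqAB : q * q = A * B := Real.mul_self_sqrt (mul_pos hA hB).le
  obtain ⟨μ, hμ, hμκ⟩ : ∃ μ : ℝ, 0 < μ ∧ μ ^ κ = q / A :=
    ⟨(q / A) ^ κ⁻¹, by positivity, Real.rpow_inv_rpow (by positivity) hκ₀.ne'⟩
  have hμκ' : μ ^ (1 - κ) * q = μ * A := by
    rw [Real.rpow_sub hμ, Real.rpow_one, hμκ]
    field_simp
  have hμκ'' : μ ^ κ * q = B := by
    rw [hμκ, div_mul_eq_mul_div, hqAB, mul_div_cancel_left₀ _ hA.ne']
  refine ⟨μ, hμ, fun x y hx hy => ?_⟩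
  have hμx : 0 ≤ μ * x := mul_nonneg hμ.le hx
  calc μ * (A * (x ^ (1 - κ) * y ^ κ)) + B * (y ^ (1 - κ) * x ^ κ)
      = q * ((μ * x) ^ (1 - κ) * y ^ κ + (μ * x) ^ κ * y ^ (1 - κ)) := by
        rw [Real.mul_rpow hμ.le hx, Real.mul_rpow hμ.le hx, ← hμκ'']
        linear_combination -(x ^ (1 - κ) * y ^ κ) * hμκ'
    _ ≤ q * (((1 - κ) * (μ * x) + κ * y) + (κ * (μ * x) + (1 - κ) * y)) := by
        gcongr
        exacts [Real.geom_mean_le_arith_mean2_weighted (sub_nonneg.2 hκ₁) hκ₀.le hμx hy (by ring),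
          Real.geom_mean_le_arith_mean2_weighted hκ₀.le (sub_nonneg.2 hκ₁) hμx hy (by ring)]
    _ = q * (μ * x + y) := by ring

lemma exists_le_mul_rpow_add_rpow_or_le {a b m n μ : ℝ} (ha : 0 ≤ a) (hb : 0 ≤ b) (hm : 0 < m)
    (hn : 0 < n) (hμ : 0 < μ) (R : ℝ) : ∃ C, ∀ U V : ℝ, 0 ≤ U → 0 ≤ V →
      R ≤ μ * U ^ m + V ^ n ∨ V ^ a * U ^ b ≤ C := by
  obtain ⟨T, hTU, hTV, hT⟩ := (((tendsto_rpow_atTop hm).const_mul_atTop hμ).eventually_ge_atTop R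
    |>.and (((tendsto_rpow_atTop hn).eventually_ge_atTop R).and (eventually_ge_atTop 0))).exists
  refine ⟨T ^ a * T ^ b, fun U V hU hV => ?_⟩
  by_cases hUT : T ≤ U
  · have : μ * T ^ m ≤ μ * U ^ m := by gcongr
    exact .inl (by linarith [Real.rpow_nonneg hV n])
  by_cases hVT : T ≤ V
  · have : T ^ n ≤ V ^ n := by gcongr
    exact .inl (by linarith [mul_nonneg hμ.le (Real.rpow_nonneg hU m)])
  · right
    gcongr <;> linarith

lemma exists_one_add_sq_mul_lt {X Y : ℝ} (h : X < Y) : ∃ ε, 0 < ε ∧ (1 + ε) ^ 2 * X < Y := by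
  have hcont : Tendsto (fun ε : ℝ => (1 + ε) ^ 2 * X) (𝓝[>] 0) (𝓝 ((1 + 0) ^ 2 * X)) :=
    (Continuous.tendsto (by fun_prop) 0).mono_left nhdsWithin_le_nhds
  rw [add_zero, one_pow, one_mul] at hcont
  obtain ⟨ε, hε, hlt⟩ := (eventually_mem_nhdsWithin.and (hcont.eventually_lt_const h)).exists
  exact ⟨ε, hε, hlt⟩

lemma exists_one_add_mul_sqrt_mul_lt_one {p θ σ X Y : ℝ} (hp : 0 < p) (hθ : 0 < θ) (hσ : 0 < σ)
    (h : X * Y < p * θ) : ∃ ε, 0 < ε ∧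
      (1 + ε) * (X * √(1 / (σ * p * θ))) * ((1 + ε) * (Y * √(σ / (θ * p)))) < 1 := by
  obtain ⟨ε, hε, hlt⟩ := exists_one_add_sq_mul_lt h
  refine ⟨ε, hε, ?_⟩
  have hsqrt : √(1 / (σ * p * θ)) * √(σ / (θ * p)) = 1 / (p * θ) := by
    rw [← Real.sqrt_mul (by positivity)]
    convert Real.sqrt_sq (by positivity : 0 ≤ 1 / (p * θ)) using 2
    field_simp
  calc (1 + ε) * (X * √(1 / (σ * p * θ))) * ((1 + ε) * (Y * √(σ / (θ * p))))
      = (1 + ε) ^ 2 * (X * Y) / (p * θ) := by linear_combination (1 + ε) ^ 2 * (X * Y) * hsqrt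
    _ < 1 := by rwa [div_lt_one (by positivity)]

section Energy

variable {N : ℕ} {Ω : Set (EuclideanSpace ℝ (Fin N))} {u v w ρ : EuclideanSpace ℝ (Fin N) → ℝ}
  {p θ lam gam a : ℝ}

lemma IsPosDirichlet.continuousOn_add_one_rpow (hw : IsPosDirichlet Ω w) (m : ℝ) :
    ContinuousOn (fun x => (w x + 1) ^ m) (closure Ω) :=
  (hw.continuousOn.add continuousOn_const).rpow_const fun x hx =>
    .inl (add_pos_of_nonneg_of_pos (hw.nonneg x hx) one_pos).ne'

lemma continuousOn_stabilityWeight (hu : IsPosDirichlet Ω u) (hv : IsPosDirichlet Ω v) :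
    ContinuousOn (stabilityWeight p θ u v) (closure Ω) :=
  (hv.continuousOn_add_one_rpow _).mul (hu.continuousOn_add_one_rpow _)

lemma stabilityWeight_nonneg (hu : IsPosDirichlet Ω u) (hv : IsPosDirichlet Ω v) :
    ∀ x ∈ Ω, 0 ≤ stabilityWeight p θ u v x := fun x hx => by
  have hux := hu.pos x hx
  have hvx := hv.pos x hx
  unfold stabilityWeight
  positivity

lemma stabilityWeight_comm : stabilityWeight θ p v u = stabilityWeight p θ u v :=
  funext fun _ => mul_comm _ _

theorem sqrt_mul_integral_sq_truncPow_le (hΩ : IsOpen Ω) (hΩb : Bornology.IsBounded Ω)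
    (hst : IsStable Ω lam gam p θ u v) (hω : IntegrableOn (stabilityWeight p θ u v) Ω)
    (hw : IsPosDirichlet Ω w) (hρ : ContinuousOn ρ (closure Ω)) (hρ₀ : ∀ x ∈ Ω, 0 ≤ ρ x)
    (heq : ∀ x ∈ Ω, -lap w x = ρ x) (ha : 1 < a) :
    √(lam * gam * p * θ) * ∫ x in Ω, stabilityWeight p θ u v x * truncPow (a / 2) (w x) ^ 2 ≤
      a ^ 2 / (4 * (a - 1)) * ∫ x in Ω, ρ x * (w x + 1) ^ (a - 1) := by
  set φ : EuclideanSpace ℝ (Fin N) → ℝ := Ω.indicator fun y => truncPow (a / 2) (w y)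
  have hφ : ∫ x in Ω, stabilityWeight p θ u v x * truncPow (a / 2) (w x) ^ 2 =
      ∫ x in Ω, stabilityWeight p θ u v x * φ x ^ 2 :=
    setIntegral_congr_fun hΩ.measurableSet fun x hx => by simp [φ, hx]
  calc √(lam * gam * p * θ) * ∫ x in Ω, stabilityWeight p θ u v x * truncPow (a / 2) (w x) ^ 2
      ≤ ∫ x in Ω, ‖gradient φ x‖ ^ 2 := by
        rw [hφ]
        exact sqrt_mul_setIntegral_stabilityWeight_le hΩ hΩb hst hω
          (hw.contDiff_indicator_comp hΩ (by norm_num) truncPow_eventuallyEq_zero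
            (contDiff_truncPow.of_le (by norm_num)))
          (hw.hasCompactSupport_indicator_comp hΩ hΩb truncPow_eventuallyEq_zero)
          (hw.tsupport_indicator_comp_subset hΩ truncPow_eventuallyEq_zero)
    _ = ∫ x in Ω, -lap w x * truncPowEnergy (a / 2) (w x) :=
        hw.integral_sq_norm_gradient_indicator_comp hΩ hΩb contDiff_truncPowEnergy
          (hasDerivAt_truncPow _) (hasDerivAt_truncPowEnergy _) truncPowEnergy_eventuallyEq_zero
    _ = ∫ x in Ω, ρ x * truncPowEnergy (a / 2) (w x) :=
        setIntegral_congr_fun hΩ.measurableSet fun x hx => by simp only [heq x hx]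
    _ ≤ ∫ x in Ω, a ^ 2 / (4 * (a - 1)) * (ρ x * (w x + 1) ^ (a - 1)) := by
        refine setIntegral_mono_on ?_ ?_ hΩ.measurableSet fun x hx => ?_
        · exact integrableOn_of_continuousOn_closure hΩb (hρ.mul
            (contDiff_truncPowEnergy.continuous.comp_continuousOn hw.continuousOn))
        · exact (integrableOn_of_continuousOn_closure hΩb
            (hρ.mul (hw.continuousOn_add_one_rpow _))).const_mul _
        · rw [mul_left_comm]
          exact mul_le_mul_of_nonneg_left (truncPowEnergy_half_le ha (hw.pos x hx).le) (hρ₀ x hx)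
    _ = _ := integral_const_mul _ _

end Energy

/-- A stable classical solution of `-Δu = λ(v+1)^p`, `-Δv = γ(u+1)^θ` in `Ω` with zero boundary
values. -/
structure IsStableSolution {N : ℕ} (Ω : Set (EuclideanSpace ℝ (Fin N))) (p θ lam gam : ℝ)
    (u v : EuclideanSpace ℝ (Fin N) → ℝ) : Prop where
  left : IsPosDirichlet Ω u
  right : IsPosDirichlet Ω v
  eq_left : ∀ x ∈ Ω, -lap u x = lam * (v x + 1) ^ p
  eq_right : ∀ x ∈ Ω, -lap v x = gam * (u x + 1) ^ θ
  stable : IsStable Ω lam gam p θ u v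

namespace IsStableSolution

variable {N : ℕ} {Ω : Set (EuclideanSpace ℝ (Fin N))} {u v : EuclideanSpace ℝ (Fin N) → ℝ}
  {p θ lam gam a b κ ε μ A B K η : ℝ}

lemma symm (h : IsStableSolution Ω p θ lam gam u v) : IsStableSolution Ω θ p gam lam v u where
  left := h.right
  right := h.left
  eq_left := h.eq_right
  eq_right := h.eq_left
  stable φ hφ := by
    have hst := h.stable φ hφ
    rw [mul_comm lam gam, mul_right_comm] at hst
    simpa only [fun x => mul_comm ((v x + 1) ^ ((p - 1) / 2)) ((u x + 1) ^ ((θ - 1) / 2))] using hst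

lemma continuousOn_weight_mul_rpow (h : IsStableSolution Ω p θ lam gam u v) (m : ℝ) :
    ContinuousOn (fun x => stabilityWeight p θ u v x * (u x + 1) ^ m) (closure Ω) :=
  (continuousOn_stabilityWeight h.left h.right).mul (h.left.continuousOn_add_one_rpow m)

lemma integral_weight_mul_sq_truncPow_le (h : IsStableSolution Ω p θ lam gam u v) (hΩ : IsOpen Ω)
    (hΩb : Bornology.IsBounded Ω) (hp : 0 < p) (hθ : 0 < θ) (hlam : 0 < lam) (hgam : 0 < gam)
    (ha : 1 < a) (hκa : a * κ = (θ + 1) / 2) (hκb : b * κ = (p + 1) / 2) :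
    ∫ x in Ω, stabilityWeight p θ u v x * truncPow (a / 2) (u x) ^ 2 ≤
      a ^ 2 / (4 * (a - 1)) * √(lam / (gam * p * θ)) *
        ∫ x in Ω, stabilityWeight p θ u v x *
          (((u x + 1) ^ a) ^ (1 - κ) * ((v x + 1) ^ b) ^ κ) := by
  have hlam_eq : √(lam * gam * p * θ) * √(lam / (gam * p * θ)) = lam := by
    rw [← Real.sqrt_mul (by positivity)]
    convert Real.sqrt_sq hlam.le using 2
    field_simp
  have hint : ∫ x in Ω, lam * (v x + 1) ^ p * (u x + 1) ^ (a - 1) =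
      lam * ∫ x in Ω, stabilityWeight p θ u v x *
        (((u x + 1) ^ a) ^ (1 - κ) * ((v x + 1) ^ b) ^ κ) := by
    rw [← integral_const_mul]
    refine setIntegral_congr_fun hΩ.measurableSet fun x hx => ?_
    simp only [mul_assoc lam]
    rw [rpow_mul_rpow_sub_one_eq (by linarith [h.left.pos x hx]) (by linarith [h.right.pos x hx])
      hκa hκb, stabilityWeight]
  have henergy := sqrt_mul_integral_sq_truncPow_le hΩ hΩb h.stable
    (integrableOn_of_continuousOn_closure hΩb (continuousOn_stabilityWeight h.left h.right))
    h.left ((h.right.continuousOn_add_one_rpow p).const_mul lam)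
    (fun x hx => mul_nonneg hlam.le
      (Real.rpow_nonneg (add_nonneg (h.right.pos x hx).le zero_le_one) p)) h.eq_left ha
  refine le_of_mul_le_mul_left (henergy.trans_eq ?_)
    (Real.sqrt_pos.2 (by positivity : 0 < lam * gam * p * θ))
  rw [hint]
  nth_rw 1 [← hlam_eq]
  ring

lemma integral_weight_mul_rpow_le (h : IsStableSolution Ω p θ lam gam u v) (hΩ : IsOpen Ω)
    (hΩb : Bornology.IsBounded Ω) (ha : 0 ≤ a) (hε : 0 < ε) :
    ∫ x in Ω, stabilityWeight p θ u v x * (u x + 1) ^ a ≤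
      (1 + ε) * (∫ x in Ω, stabilityWeight p θ u v x * truncPow (a / 2) (u x) ^ 2) +
        (1 + 1 / ε) * 3 ^ a * ∫ x in Ω, stabilityWeight p θ u v x := by
  have hω := continuousOn_stabilityWeight (p := p) (θ := θ) h.left h.right
  have htrunc : ContinuousOn
      (fun x => stabilityWeight p θ u v x * truncPow (a / 2) (u x) ^ 2) (closure Ω) :=
    hω.mul ((contDiff_truncPow.continuous.comp_continuousOn h.left.continuousOn).pow 2)
  rw [← integral_const_mul, ← integral_const_mul, ← integral_add
    ((integrableOn_of_continuousOn_closure hΩb htrunc).const_mul _)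
    ((integrableOn_of_continuousOn_closure hΩb hω).const_mul _)]
  refine setIntegral_mono_on
    (integrableOn_of_continuousOn_closure hΩb (h.continuousOn_weight_mul_rpow a))
    (integrableOn_of_continuousOn_closure hΩb ((htrunc.const_mul _).add (hω.const_mul _)))
    hΩ.measurableSet fun x hx => ?_
  have := mul_le_mul_of_nonneg_left
    (add_one_rpow_le_sq_truncPow_half ha hε (h.left.pos x hx).le)
    (stabilityWeight_nonneg (p := p) (θ := θ) h.left h.right x hx)
  linarith

lemma continuousOn_weight_mul_interpolant (h : IsStableSolution Ω p θ lam gam u v)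
    (hκ₀ : 0 ≤ κ) (hκ₁ : κ ≤ 1) :
    ContinuousOn (fun x => stabilityWeight p θ u v x *
      (((u x + 1) ^ a) ^ (1 - κ) * ((v x + 1) ^ b) ^ κ)) (closure Ω) :=
  (continuousOn_stabilityWeight h.left h.right).mul
    (((h.left.continuousOn_add_one_rpow a).rpow_const fun _ _ => .inr (sub_nonneg.2 hκ₁)).mul
      ((h.right.continuousOn_add_one_rpow b).rpow_const fun _ _ => .inr hκ₀))

lemma integral_weight_mul_interpolant_le (h : IsStableSolution Ω p θ lam gam u v)
    (hΩ : IsOpen Ω) (hΩb : Bornology.IsBounded Ω) (hκ₀ : 0 ≤ κ) (hκ₁ : κ ≤ 1) {q : ℝ}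
    (hyoung : ∀ x y : ℝ, 0 ≤ x → 0 ≤ y →
      μ * (A * (x ^ (1 - κ) * y ^ κ)) + B * (y ^ (1 - κ) * x ^ κ) ≤ q * (μ * x + y)) :
    μ * (A * ∫ x in Ω, stabilityWeight p θ u v x *
        (((u x + 1) ^ a) ^ (1 - κ) * ((v x + 1) ^ b) ^ κ)) +
      B * ∫ x in Ω, stabilityWeight p θ u v x *
        (((v x + 1) ^ b) ^ (1 - κ) * ((u x + 1) ^ a) ^ κ) ≤
      q * (μ * (∫ x in Ω, stabilityWeight p θ u v x * (u x + 1) ^ a) +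
        ∫ x in Ω, stabilityWeight p θ u v x * (v x + 1) ^ b) := by
  have hu := integrableOn_of_continuousOn_closure hΩb (h.continuousOn_weight_mul_rpow a)
  have hv := integrableOn_of_continuousOn_closure hΩb (h.symm.continuousOn_weight_mul_rpow b)
  have huv := integrableOn_of_continuousOn_closure hΩb
    (h.continuousOn_weight_mul_interpolant (a := a) (b := b) hκ₀ hκ₁)
  have hvu := integrableOn_of_continuousOn_closure hΩb
    (h.symm.continuousOn_weight_mul_interpolant (a := b) (b := a) hκ₀ hκ₁)
  rw [stabilityWeight_comm] at hv hvu
  simp only [← integral_const_mul]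
  rw [← integral_add ((huv.const_mul A).const_mul μ) (hvu.const_mul B),
    ← integral_add (hu.const_mul μ) hv, ← integral_const_mul]
  refine setIntegral_mono_on (((huv.const_mul A).const_mul μ).add (hvu.const_mul B))
    (((hu.const_mul μ).add hv).const_mul q) hΩ.measurableSet fun x hx => ?_
  have hux := h.left.pos x hx
  have hvx := h.right.pos x hx
  have := mul_le_mul_of_nonneg_left
    (hyoung ((u x + 1) ^ a) ((v x + 1) ^ b) (by positivity) (by positivity))
    (stabilityWeight_nonneg (p := p) (θ := θ) h.left h.right x hx)
  linarith

lemma exists_forall_mul_integral_weight_le (hΩ : IsOpen Ω) (hΩb : Bornology.IsBounded Ω)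
    (hp : 1 ≤ p) (hθ : 1 ≤ θ) (ha : 0 < a) (hb : 0 < b) (hμ : 0 < μ) (hη : 0 < η) (hK : 0 ≤ K) :
    ∃ C, ∀ lam gam u v, IsStableSolution Ω p θ lam gam u v →
      K * ∫ x in Ω, stabilityWeight p θ u v x ≤
        η * (μ * (∫ x in Ω, stabilityWeight p θ u v x * (u x + 1) ^ a) +
          ∫ x in Ω, stabilityWeight p θ u v x * (v x + 1) ^ b) + C := by
  obtain ⟨C, hC⟩ := exists_le_mul_rpow_add_rpow_or_le (a := (p - 1) / 2) (b := (θ - 1) / 2)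
    (by linarith) (by linarith) ha hb hμ (K / η)
  refine ⟨∫ _ in Ω, K * |C|, fun lam gam u v h => ?_⟩
  have hω := integrableOn_of_continuousOn_closure hΩb
    (continuousOn_stabilityWeight (p := p) (θ := θ) h.left h.right)
  have hu := integrableOn_of_continuousOn_closure hΩb (h.continuousOn_weight_mul_rpow a)
  have hv := integrableOn_of_continuousOn_closure hΩb (h.symm.continuousOn_weight_mul_rpow b)
  have hconst : IntegrableOn (fun _ => K * |C|) Ω :=
    integrableOn_of_continuousOn_closure hΩb continuousOn_const
  rw [stabilityWeight_comm] at hv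
  have huv : IntegrableOn (fun x => η * (μ * (stabilityWeight p θ u v x * (u x + 1) ^ a) +
      stabilityWeight p θ u v x * (v x + 1) ^ b)) Ω := ((hu.const_mul μ).add hv).const_mul η
  rw [← integral_const_mul, ← integral_const_mul, ← integral_add (hu.const_mul μ) hv,
    ← integral_const_mul, ← integral_add huv hconst]
  refine setIntegral_mono_on (hω.const_mul K) (huv.add hconst) hΩ.measurableSet fun x hx => ?_
  have hux := h.left.pos x hx
  have hvx := h.right.pos x hx
  have hωx := stabilityWeight_nonneg (p := p) (θ := θ) h.left h.right x hx
  rcases hC (u x + 1) (v x + 1) (by positivity) (by positivity) with hlarge | hsmall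
  · rw [div_le_iff₀' hη] at hlarge
    linarith [mul_le_mul_of_nonneg_left hlarge hωx, mul_nonneg hK (abs_nonneg C)]
  · have : 0 ≤ η * (μ * (stabilityWeight p θ u v x * (u x + 1) ^ a) +
        stabilityWeight p θ u v x * (v x + 1) ^ b) := by positivity
    have hωC : stabilityWeight p θ u v x ≤ |C| := hsmall.trans (le_abs_self C)
    linarith [mul_le_mul_of_nonneg_left hωC hK]

lemma exists_forall_integral_weight_mul_rpow_add_le (hΩ : IsOpen Ω) (hΩb : Bornology.IsBounded Ω)
    {σ : ℝ} (hσ : 0 < σ) (hp : 0 < p) (hθ : 0 < θ) (ha : 1 < a) (hb : 1 < b) (hκ₀ : 0 < κ)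
    (hκ₁ : κ ≤ 1) (hκa : a * κ = (θ + 1) / 2) (hκb : b * κ = (p + 1) / 2)
    (hab : a ^ 2 / (4 * (a - 1)) * (b ^ 2 / (4 * (b - 1))) < p * θ) :
    ∃ μ q K : ℝ, 0 < μ ∧ q < 1 ∧ 0 ≤ K ∧
      ∀ lam u v, 0 < lam → IsStableSolution Ω p θ lam (σ * lam) u v →
        μ * (∫ x in Ω, stabilityWeight p θ u v x * (u x + 1) ^ a) +
            ∫ x in Ω, stabilityWeight p θ u v x * (v x + 1) ^ b ≤
          q * (μ * (∫ x in Ω, stabilityWeight p θ u v x * (u x + 1) ^ a) +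
            ∫ x in Ω, stabilityWeight p θ u v x * (v x + 1) ^ b) +
          K * ∫ x in Ω, stabilityWeight p θ u v x := by
  set ca := a ^ 2 / (4 * (a - 1)) with hca_def
  set cb := b ^ 2 / (4 * (b - 1)) with hcb_def
  have hca : 0 < ca := div_pos (by positivity) (by linarith)
  have hcb : 0 < cb := div_pos (by positivity) (by linarith)
  obtain ⟨ε, hε, hAB⟩ := exists_one_add_mul_sqrt_mul_lt_one hp hθ hσ hab
  have hε₁ : 0 < 1 + ε := by positivity
  set A := (1 + ε) * (ca * √(1 / (σ * p * θ)))
  set B := (1 + ε) * (cb * √(σ / (θ * p)))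
  have hA : 0 < A := mul_pos hε₁ (mul_pos hca (Real.sqrt_pos.2 (by positivity)))
  have hB : 0 < B := mul_pos hε₁ (mul_pos hcb (Real.sqrt_pos.2 (by positivity)))
  obtain ⟨μ, hμ, hyoung⟩ := exists_mul_rpow_add_mul_rpow_le hκ₀ hκ₁ hA hB
  refine ⟨μ, √(A * B), μ * ((1 + 1 / ε) * 3 ^ a) + (1 + 1 / ε) * 3 ^ b, hμ,
    by rwa [Real.sqrt_lt' one_pos, one_pow], by positivity,
    fun lam u v hlam h => ?_⟩
  have hσlam : 0 < σ * lam := mul_pos hσ hlam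
  have hu := h.integral_weight_mul_sq_truncPow_le hΩ hΩb hp hθ hlam hσlam ha hκa hκb
  have hv := h.symm.integral_weight_mul_sq_truncPow_le hΩ hΩb hθ hp hσlam hlam hb hκb hκa
  rw [show lam / (σ * lam * p * θ) = 1 / (σ * p * θ) by field_simp, ← hca_def] at hu
  rw [show σ * lam / (lam * θ * p) = σ / (θ * p) by field_simp, ← hcb_def,
    stabilityWeight_comm] at hv
  have hu' := h.integral_weight_mul_rpow_le hΩ hΩb (one_pos.trans ha).le hε
  have hv' := h.symm.integral_weight_mul_rpow_le hΩ hΩb (one_pos.trans hb).le hε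
  rw [stabilityWeight_comm] at hv'
  have huv := h.integral_weight_mul_interpolant_le (a := a) (b := b) hΩ hΩb hκ₀.le hκ₁ hyoung
  linarith [mul_le_mul_of_nonneg_left hu' hμ.le, mul_le_mul_of_nonneg_left hv hε₁.le,
    mul_le_mul_of_nonneg_left hu (mul_pos hμ hε₁).le]

theorem exists_forall_integral_weight_mul_rpow_le (hΩ : IsOpen Ω) (hΩb : Bornology.IsBounded Ω)
    {σ : ℝ} (hσ : 0 < σ) (hp : 1 ≤ p) (hθ : 1 ≤ θ) (ha : 1 < a) (hb : 1 < b) (hκ₀ : 0 < κ)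
    (hκ₁ : κ ≤ 1) (hκa : a * κ = (θ + 1) / 2) (hκb : b * κ = (p + 1) / 2)
    (hab : a ^ 2 / (4 * (a - 1)) * (b ^ 2 / (4 * (b - 1))) < p * θ) :
    ∃ C, ∀ lam u v, 0 < lam → IsStableSolution Ω p θ lam (σ * lam) u v →
      ∫ x in Ω, stabilityWeight p θ u v x * (u x + 1) ^ a ≤ C ∧
        ∫ x in Ω, stabilityWeight p θ u v x * (v x + 1) ^ b ≤ C := by
  obtain ⟨μ, q, K, hμ, hq, hK, hself⟩ := exists_forall_integral_weight_mul_rpow_add_le hΩ hΩb hσ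
    (one_pos.trans_le hp) (one_pos.trans_le hθ) ha hb hκ₀ hκ₁ hκa hκb hab
  have hη : 0 < (1 - q) / 2 := by linarith
  obtain ⟨C, hC⟩ := exists_forall_mul_integral_weight_le hΩ hΩb hp hθ (one_pos.trans ha)
    (one_pos.trans hb) hμ hη hK
  set D := C / ((1 - q) / 2)
  refine ⟨max (D / μ) D, fun lam u v hlam h => ?_⟩
  set X := ∫ x in Ω, stabilityWeight p θ u v x * (u x + 1) ^ a
  set Y := ∫ x in Ω, stabilityWeight p θ u v x * (v x + 1) ^ b
  have hX : 0 ≤ X := setIntegral_nonneg hΩ.measurableSet fun x hx =>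
    mul_nonneg (stabilityWeight_nonneg h.left h.right x hx)
      (Real.rpow_nonneg (add_nonneg (h.left.pos x hx).le zero_le_one) a)
  have hY : 0 ≤ Y := setIntegral_nonneg hΩ.measurableSet fun x hx =>
    mul_nonneg (stabilityWeight_nonneg h.left h.right x hx)
      (Real.rpow_nonneg (add_nonneg (h.right.pos x hx).le zero_le_one) b)
  have hD : μ * X + Y ≤ D := by
    rw [le_div_iff₀' hη]
    linarith [hself lam u v hlam h, hC lam (σ * lam) u v h]
  refine ⟨le_max_of_le_left ?_, le_max_of_le_right (by nlinarith)⟩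
  rw [le_div_iff₀' hμ]
  linarith

end IsStableSolution

lemma mul_lt_of_Lpoly_neg {p θ s : ℝ} (hp : 1 < p) (hθ : 1 < θ) (hs : 1 < s)
    (hαs : 1 < (θ + 1) / (p + 1) * s) (hL : Lpoly p θ s < 0) :
    ((θ + 1) / (p + 1) * s) ^ 2 / (4 * ((θ + 1) / (p + 1) * s - 1)) *
      (s ^ 2 / (4 * (s - 1))) < p * θ := by
  rw [Lpoly_eq (by positivity) (by positivity), ← inv_div, inv_pow] at hL
  set α := (θ + 1) / (p + 1)
  have hα : 0 < α := by positivity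
  rw [div_mul_div_comm, div_lt_iff₀ (by nlinarith)]
  have := mul_neg_of_pos_of_neg (sq_pos_of_pos hα) hL
  field_simp at this
  linarith

/-! ### Comparison and bootstrap -/

section Comparison

variable {N : ℕ} {Ω : Set (EuclideanSpace ℝ (Fin N))} {u v : EuclideanSpace ℝ (Fin N) → ℝ}
  {x : EuclideanSpace ℝ (Fin N)} {p θ σ lam c α : ℝ}

lemma IsPosDirichlet.lap_add_one_rpow_ge (hu : IsPosDirichlet Ω u) (hΩ : IsOpen Ω) (hx : x ∈ Ω)
    (hα : 1 ≤ α) :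
    α * (u x + 1) ^ (α - 1) * lap u x ≤ lap (fun y => (u y + 1) ^ α) x := by
  have hux := hu.pos x hx
  have hderiv : HasDerivAt (fun t => α * (t + 1) ^ (α - 1))
      (α * ((α - 1) * (u x + 1) ^ (α - 1 - 1))) (u x) :=
    (hasDerivAt_add_one_rpow (α - 1) (by linarith)).const_mul α
  rw [lap_comp (G := fun t => (t + 1) ^ α) (hu.contDiffAt hΩ hx)
    ((lt_mem_nhds (by linarith : -1 < u x)).mono fun t => hasDerivAt_add_one_rpow α) hderiv]
  exact le_add_of_nonneg_right (mul_nonneg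
    (mul_nonneg (by positivity) (mul_nonneg (sub_nonneg.2 hα) (by positivity)))
    (Finset.sum_nonneg fun i _ => sq_nonneg _))

lemma lap_const_mul_add_one_rpow_sub_pos (hΩ : IsOpen Ω) (hu : IsPosDirichlet Ω u)
    (hv : IsPosDirichlet Ω v) (hx : x ∈ Ω) (hequ : -lap u x = lam * (v x + 1) ^ p)
    (heqv : -lap v x = σ * lam * (u x + 1) ^ θ) (hlam : 0 < lam) (hp : 0 ≤ p) (hα : 1 ≤ α)
    (hαp : α * (p + 1) = θ + 1) (hc₀ : 0 < c) (hc₁ : c ≤ 1) (hcσ : c * α < σ)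
    (hlt : v x + 1 < c * (u x + 1) ^ α) :
    0 < lap (fun y => c * (u y + 1) ^ α - v y) x := by
  have hU : 0 < u x + 1 := by linarith [hu.pos x hx]
  have hV : 0 < v x + 1 := by linarith [hv.pos x hx]
  have hUα : ContDiffAt ℝ 2 (fun y => (u y + 1) ^ α) x :=
    ((hu.contDiffAt hΩ hx).add contDiffAt_const).rpow_const_of_ne hU.ne'
  have hUθ : (u x + 1) ^ θ = (u x + 1) ^ (α - 1) * ((u x + 1) ^ α) ^ p := by
    rw [← Real.rpow_mul hU.le, ← Real.rpow_add hU]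
    congr 1
    linarith
  have hVp : (v x + 1) ^ p ≤ ((u x + 1) ^ α) ^ p := by
    gcongr
    exact hlt.le.trans (mul_le_of_le_one_left (by positivity) hc₁)
  have hcα : 0 ≤ c * α := by positivity
  rw [lap_const_mul_sub c hUα (hv.contDiffAt hΩ hx)]
  calc 0 < (σ - c * α) * (lam * (u x + 1) ^ (α - 1) * ((u x + 1) ^ α) ^ p) :=
        mul_pos (sub_pos.2 hcσ) (by positivity)
    _ ≤ lam * (u x + 1) ^ (α - 1) * (σ * ((u x + 1) ^ α) ^ p - c * α * (v x + 1) ^ p) := by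
        have := mul_le_mul_of_nonneg_left (mul_le_mul_of_nonneg_left hVp hcα)
          (by positivity : 0 ≤ lam * (u x + 1) ^ (α - 1))
        linarith
    _ = c * (α * (u x + 1) ^ (α - 1) * lap u x) - lap v x := by
        rw [← neg_neg (lap u x), ← neg_neg (lap v x), hequ, heqv, hUθ]
        ring
    _ ≤ c * lap (fun y => (u y + 1) ^ α) x - lap v x := by
        gcongr
        exact hu.lap_add_one_rpow_ge hΩ hx hα

theorem const_mul_add_one_rpow_le_add_one (hΩ : IsOpen Ω) (hΩb : Bornology.IsBounded Ω)
    (hu : IsPosDirichlet Ω u) (hv : IsPosDirichlet Ω v)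
    (hequ : ∀ x ∈ Ω, -lap u x = lam * (v x + 1) ^ p)
    (heqv : ∀ x ∈ Ω, -lap v x = σ * lam * (u x + 1) ^ θ) (hlam : 0 < lam) (hp : 0 ≤ p)
    (hα : 1 ≤ α) (hαp : α * (p + 1) = θ + 1) (hc₀ : 0 < c) (hc₁ : c ≤ 1) (hcσ : c * α < σ) :
    ∀ x ∈ Ω, c * (u x + 1) ^ α ≤ v x + 1 := by
  by_contra! ⟨x₁, hx₁, hlt₁⟩
  have hcont : ContinuousOn (fun x => c * (u x + 1) ^ α - v x) (closure Ω) :=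
    ((hu.continuousOn_add_one_rpow α).const_mul c).sub hv.continuousOn
  obtain ⟨x, hx, hmax⟩ :=
    hΩb.isCompact_closure.exists_isMaxOn ⟨x₁, subset_closure hx₁⟩ hcont
  have hlt : v x + 1 < c * (u x + 1) ^ α := by
    have : c * (u x₁ + 1) ^ α - v x₁ ≤ c * (u x + 1) ^ α - v x := hmax (subset_closure hx₁)
    linarith
  have hxΩ : x ∈ Ω := by
    by_contra hxΩ
    have hxf : x ∈ frontier Ω := hΩ.frontier_eq ▸ ⟨hx, hxΩ⟩
    rw [hu.eq_zero x hxf, hv.eq_zero x hxf, zero_add, Real.one_rpow] at hlt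
    linarith
  have hUα : ContDiffAt ℝ 2 (fun y => (u y + 1) ^ α) x :=
    ((hu.contDiffAt hΩ hxΩ).add contDiffAt_const).rpow_const_of_ne
      (by linarith [hu.pos x hxΩ] : 0 < u x + 1).ne'
  exact (lap_const_mul_add_one_rpow_sub_pos hΩ hu hv hxΩ (hequ x hxΩ) (heqv x hxΩ) hlam hp hα hαp
    hc₀ hc₁ hcσ hlt).not_ge (lap_nonpos_of_isLocalMax
      ((contDiffAt_const.mul hUα).sub (hv.contDiffAt hΩ hxΩ))
      (hmax.isLocalMax (Filter.mem_of_superset (hΩ.mem_nhds hxΩ) subset_closure)))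

end Comparison

lemma exists_forall_le_of_mul_le_add_rpow {c γ : ℝ} (hc : 0 < c) (hγ : γ < 1) (K₁ K₂ : ℝ) :
    ∃ Y, ∀ y : ℝ, c * y ≤ K₁ + K₂ * y ^ γ → y ≤ Y := by
  have hlittle : (fun y : ℝ => K₁ + K₂ * y ^ γ) =o[atTop] id := by
    refine (Asymptotics.isLittleO_const_id_atTop K₁).add (.const_mul_left ?_ K₂)
    refine Asymptotics.isLittleO_of_tendsto'
      ((eventually_ne_atTop 0).mono fun y hy hy' => absurd hy' hy) ?_
    exact (tendsto_rpow_neg_atTop (sub_pos.2 hγ)).congr'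
      ((eventually_gt_atTop 0).mono fun y hy => by
        simp only [neg_sub, Real.rpow_sub_one hy.ne', id])
  obtain ⟨Y, hY⟩ := eventually_atTop.1
    ((hlittle.bound (half_pos hc)).and (eventually_gt_atTop (0 : ℝ)))
  refine ⟨Y, fun y hy => not_lt.1 fun hlt => ?_⟩
  obtain ⟨hle, hy₀⟩ := hY y hlt.le
  rw [id, Real.norm_of_nonneg hy₀.le] at hle
  nlinarith [Real.le_norm_self (K₁ + K₂ * y ^ γ)]

section Bootstrap

variable {N : ℕ} {Ω : Set (EuclideanSpace ℝ (Fin N))} {u v : EuclideanSpace ℝ (Fin N) → ℝ}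
  {p θ c α a r E K T : ℝ}

lemma rpow_mul_integral_add_one_rpow_le (hΩ : IsOpen Ω) (hΩb : Bornology.IsBounded Ω)
    (hu : IsPosDirichlet Ω u) (hv : IsPosDirichlet Ω v) (hp : 1 ≤ p) (hαp : α * (p + 1) = θ + 1)
    (hc : 0 ≤ c) (hcomp : ∀ x ∈ Ω, c * (u x + 1) ^ α ≤ v x + 1) :
    c ^ ((p - 1) / 2) * ∫ x in Ω, (u x + 1) ^ (θ - α + a) ≤
      ∫ x in Ω, stabilityWeight p θ u v x * (u x + 1) ^ a := by
  rw [← integral_const_mul]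
  refine setIntegral_mono_on
    ((integrableOn_of_continuousOn_closure hΩb (hu.continuousOn_add_one_rpow _)).const_mul _)
    (integrableOn_of_continuousOn_closure hΩb
      ((continuousOn_stabilityWeight hu hv).mul (hu.continuousOn_add_one_rpow a)))
    hΩ.measurableSet fun x hx => ?_
  have hU : 0 < u x + 1 := by linarith [hu.pos x hx]
  have hexp : θ - α + a = α * ((p - 1) / 2) + (θ - 1) / 2 + a := by linear_combination -hαp / 2
  calc c ^ ((p - 1) / 2) * (u x + 1) ^ (θ - α + a)
      = (c * (u x + 1) ^ α) ^ ((p - 1) / 2) * (u x + 1) ^ ((θ - 1) / 2) * (u x + 1) ^ a := by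
        rw [hexp, Real.rpow_add hU, Real.rpow_add hU, Real.mul_rpow hc (by positivity),
          Real.rpow_mul hU.le]
        ring
    _ ≤ (v x + 1) ^ ((p - 1) / 2) * (u x + 1) ^ ((θ - 1) / 2) * (u x + 1) ^ a := by
        gcongr
        exact hcomp x hx

lemma integral_le_integral_stabilityWeight_mul_rpow (hΩ : IsOpen Ω) (hΩb : Bornology.IsBounded Ω)
    (hu : IsPosDirichlet Ω u) (hv : IsPosDirichlet Ω v) (hp : 1 ≤ p) (hθ : 1 ≤ θ) (ha : 1 ≤ a) :
    ∫ x in Ω, v x ≤ ∫ x in Ω, stabilityWeight p θ u v x * (v x + 1) ^ a := by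
  refine setIntegral_mono_on (integrableOn_of_continuousOn_closure hΩb hv.continuousOn)
    (integrableOn_of_continuousOn_closure hΩb
      ((continuousOn_stabilityWeight hu hv).mul (hv.continuousOn_add_one_rpow a)))
    hΩ.measurableSet fun x hx => ?_
  have hU : 1 ≤ u x + 1 := by linarith [hu.pos x hx]
  have hV : 1 ≤ v x + 1 := by linarith [hv.pos x hx]
  have hω : 1 ≤ stabilityWeight p θ u v x := one_le_mul_of_one_le_of_one_le
    (Real.one_le_rpow hV (by linarith)) (Real.one_le_rpow hU (by linarith))
  calc v x ≤ v x + 1 := by linarith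
    _ ≤ (v x + 1) ^ a := Real.self_le_rpow_of_one_le hV ha
    _ ≤ stabilityWeight p θ u v x * (v x + 1) ^ a := le_mul_of_one_le_left (by positivity) hω

lemma integral_add_one_rpow_le_rpow_mul (hΩ : IsOpen Ω) (hΩb : Bornology.IsBounded Ω)
    (hu : IsPosDirichlet Ω u) (hα : 0 < α) {m : ℝ} (hEm : E ≤ m)
    (hT : ∀ x ∈ Ω, (u x + 1) ^ α ≤ T) :
    ∫ x in Ω, (u x + 1) ^ m ≤ T ^ ((m - E) / α) * ∫ x in Ω, (u x + 1) ^ E := by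
  rw [← integral_const_mul]
  refine setIntegral_mono_on
    (integrableOn_of_continuousOn_closure hΩb (hu.continuousOn_add_one_rpow m))
    ((integrableOn_of_continuousOn_closure hΩb (hu.continuousOn_add_one_rpow E)).const_mul _)
    hΩ.measurableSet fun x hx => ?_
  have hU : 0 < u x + 1 := by linarith [hu.pos x hx]
  calc (u x + 1) ^ m = ((u x + 1) ^ α) ^ ((m - E) / α) * (u x + 1) ^ E := by
        rw [← Real.rpow_mul hU.le, ← Real.rpow_add hU]
        congr 1
        field_simp
        ring
    _ ≤ T ^ ((m - E) / α) * (u x + 1) ^ E := by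
        have hmE : 0 ≤ (m - E) / α := div_nonneg (sub_nonneg.2 hEm) hα.le
        exact mul_le_mul_of_nonneg_right (Real.rpow_le_rpow (by positivity) (hT x hx) hmE)
          (by positivity)

lemma integral_const_mul_rpow_rpow_one_div (hΩ : IsOpen Ω) (hu : IsPosDirichlet Ω u)
    (hK : 0 ≤ K) (hr : 0 < r) :
    (∫ x in Ω, (K * (u x + 1) ^ θ) ^ r) ^ (1 / r) =
      K * (∫ x in Ω, (u x + 1) ^ (θ * r)) ^ (1 / r) := by
  have hpow : EqOn (fun x => (K * (u x + 1) ^ θ) ^ r) (fun x => K ^ r * (u x + 1) ^ (θ * r)) Ω :=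
    fun x hx => by
      have hU : 0 < u x + 1 := by linarith [hu.pos x hx]
      simp only [Real.mul_rpow hK (Real.rpow_nonneg hU.le θ), Real.rpow_mul hU.le]
  rw [setIntegral_congr_fun hΩ.measurableSet hpow, integral_const_mul,
    Real.mul_rpow (by positivity), one_div, Real.rpow_rpow_inv hK hr.ne']
  exact setIntegral_nonneg hΩ.measurableSet fun x hx =>
    Real.rpow_nonneg (by linarith [hu.pos x hx]) _

lemma integral_const_mul_rpow_rpow_le (hΩ : IsOpen Ω) (hΩb : Bornology.IsBounded Ω)
    (hu : IsPosDirichlet Ω u) (hK : 0 ≤ K) (hr : 0 < r) (hα : 0 < α) (hEr : E ≤ θ * r)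
    (hT₀ : 0 ≤ T) (hT : ∀ x ∈ Ω, (u x + 1) ^ α ≤ T) {C : ℝ}
    (hC : ∫ x in Ω, (u x + 1) ^ E ≤ C) :
    (∫ x in Ω, (K * (u x + 1) ^ θ) ^ r) ^ (1 / r) ≤
      K * C ^ (1 / r) * T ^ ((θ * r - E) / α * (1 / r)) := by
  have hint (m : ℝ) : 0 ≤ ∫ x in Ω, (u x + 1) ^ m :=
    setIntegral_nonneg hΩ.measurableSet fun x hx => Real.rpow_nonneg (by linarith [hu.pos x hx]) m
  rw [integral_const_mul_rpow_rpow_one_div hΩ hu hK hr, mul_assoc]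
  refine mul_le_mul_of_nonneg_left ?_ hK
  calc (∫ x in Ω, (u x + 1) ^ (θ * r)) ^ (1 / r)
      ≤ (T ^ ((θ * r - E) / α) * C) ^ (1 / r) :=
        Real.rpow_le_rpow (hint _) ((integral_add_one_rpow_le_rpow_mul hΩ hΩb hu hα hEr hT).trans
          (mul_le_mul_of_nonneg_left hC (by positivity))) (by positivity)
    _ = C ^ (1 / r) * T ^ ((θ * r - E) / α * (1 / r)) := by
        rw [Real.mul_rpow (by positivity) ((hint E).trans hC), ← Real.rpow_mul hT₀, mul_comm]

theorem exists_forall_add_le_of_integral_le (hΩ : IsOpen Ω) (hΩb : Bornology.IsBounded Ω)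
    (hr : 1 < r) (hN : (N : ℝ) < 2 * r) (hα : 1 ≤ α) (hc : 0 < c) (hK : 0 ≤ K)
    (hEr : E ≤ θ * r) (hrE : θ * r - E < α * r) (C₁ C₂ : ℝ) :
    ∃ M, ∀ u v : EuclideanSpace ℝ (Fin N) → ℝ, IsPosDirichlet Ω u → IsPosDirichlet Ω v →
      (∀ x ∈ Ω, c * (u x + 1) ^ α ≤ v x + 1) → (∀ x ∈ Ω, -lap v x ≤ K * (u x + 1) ^ θ) →
      ∫ x in Ω, v x ≤ C₁ → ∫ x in Ω, (u x + 1) ^ E ≤ C₂ → ∀ x ∈ Ω, u x + v x ≤ M := by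
  have hr₀ : 0 < r := one_pos.trans hr
  have hα₀ : 0 < α := one_pos.trans_le hα
  have hγ : (θ * r - E) / α * (1 / r) < 1 := by
    rwa [← div_eq_mul_one_div, div_div, div_lt_one (mul_pos hα₀ hr₀)]
  obtain ⟨C, hC, hsup⟩ := exists_forall_isPosDirichlet_le hΩ hΩb hr hN
  obtain ⟨Y, hY⟩ := exists_forall_le_of_mul_le_add_rpow hc hγ (3 + C * C₁)
    (C * K * C₂ ^ (1 / r))
  refine ⟨Y + c * Y, fun u v hu hv hcomp hlap hv₁ hu₂ x hx => ?_⟩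
  have hbdd : BddAbove (v '' Ω) := (hΩb.isCompact_closure.bddAbove_image hv.continuousOn).mono
    (image_mono subset_closure)
  set T := (sSup (v '' Ω) + 1) / c
  have hvT {y} (hy : y ∈ Ω) : v y + 1 ≤ c * T := by
    rw [mul_div_cancel₀ _ hc.ne']
    linarith [le_csSup hbdd (mem_image_of_mem v hy)]
  have huT {y} (hy : y ∈ Ω) : (u y + 1) ^ α ≤ T :=
    le_of_mul_le_mul_left ((hcomp y hy).trans (hvT hy)) hc
  have hT₀ : 0 ≤ T := (Real.rpow_nonneg (by linarith [hu.pos x hx]) α).trans (huT hx)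
  have hsource :=
    integral_const_mul_rpow_rpow_le hΩ hΩb hu hK hr₀ hα₀ hEr hT₀ (fun y hy => huT hy) hu₂
  have hTY : T ≤ Y := by
    refine hY T ?_
    rw [mul_div_cancel₀ _ hc.ne', ← le_sub_iff_add_le]
    refine csSup_le ⟨_, mem_image_of_mem v hx⟩ (forall_mem_image.2 fun y hy => ?_)
    have := hsup v _ hv ((hu.continuousOn_add_one_rpow θ).const_mul K)
      (fun y hy => mul_nonneg hK (Real.rpow_nonneg (by linarith [hu.pos y hy]) θ)) hlap y hy
    linarith [mul_le_mul_of_nonneg_left (add_le_add hv₁ hsource) hC.le]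
  have hux : u x + 1 ≤ T :=
    (Real.self_le_rpow_of_one_le (by linarith [hu.pos x hx]) hα).trans (huT hx)
  linarith [hvT hx, mul_le_mul_of_nonneg_left hTY hc.le]

end Bootstrap

lemma exists_exponent_of_mul_sub_lt {θ α E d : ℝ} (hα : 0 < α) (hαθ : α < θ) (hE : θ - α < E)
    (hd : d * (θ - α) < E) : ∃ r, 1 < r ∧ d < r ∧ E ≤ θ * r ∧ θ * r - E < α * r := by
  have hαθ' : 0 < θ - α := sub_pos.2 hαθ
  have hθ : 0 < θ := hα.trans hαθ
  have hEθ : E / θ < E / (θ - α) :=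
    div_lt_div_of_pos_left (hαθ'.trans hE) hαθ' (sub_lt_self θ hα)
  obtain ⟨r, hr, hrE⟩ := exists_between
    (max_lt ((one_lt_div hαθ').2 hE) (max_lt ((lt_div_iff₀ hαθ').2 hd) hEθ))
  obtain ⟨hr₁, hr₂⟩ := max_lt_iff.1 hr
  obtain ⟨hdr, hEr⟩ := max_lt_iff.1 hr₂
  refine ⟨r, hr₁, hdr, ((div_lt_iff₀' hθ).1 hEr).le, ?_⟩
  linarith [(lt_div_iff₀ hαθ').1 hrE]

lemma Hpoly_comm (p θ x : ℝ) : Hpoly p θ x = Hpoly θ p x := by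
  unfold Hpoly
  ring

namespace IsStableSolution

variable {N : ℕ} {Ω : Set (EuclideanSpace ℝ (Fin N))} {p θ σ α s x₀ : ℝ}

theorem exists_forall_integral_add_one_rpow_le (hΩ : IsOpen Ω) (hΩb : Bornology.IsBounded Ω)
    (hp : 1 < p) (hpθ : p ≤ θ) (hσ : 0 < σ) (hs : p + 1 < s) (hLs : Lpoly p θ s < 0)
    (hαp : α * (p + 1) = θ + 1) :
    ∃ c C₁ C₂, 0 < c ∧ ∀ lam u v, 0 < lam → IsStableSolution Ω p θ lam (σ * lam) u v →
      (∀ x ∈ Ω, c * (u x + 1) ^ α ≤ v x + 1) ∧ ∫ x in Ω, v x ≤ C₁ ∧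
        ∫ x in Ω, (u x + 1) ^ (θ - α + α * s) ≤ C₂ := by
  have hp₀ : 0 < p := one_pos.trans hp
  have hθ : 1 < θ := hp.trans_le hpθ
  have hs₁ : 1 < s := by linarith
  have hα_eq : (θ + 1) / (p + 1) = α := (eq_div_of_mul_eq (by positivity) hαp).symm
  have hα : 1 ≤ α := hα_eq ▸ (one_le_div (by positivity)).2 (by linarith)
  have hαs : 1 < α * s := one_lt_mul_of_le_of_lt hα hs₁
  have hκ : s * ((p + 1) / (2 * s)) = (p + 1) / 2 := by field_simp
  obtain ⟨C, hC⟩ := exists_forall_integral_weight_mul_rpow_le hΩ hΩb hσ hp.le hθ.le hαs hs₁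
    (div_pos (by positivity) (by positivity)) ((div_le_one (by positivity)).2 (by linarith))
    (by rw [mul_assoc, hκ, ← hαp, mul_div_assoc]) hκ
    (hα_eq ▸ mul_lt_of_Lpoly_neg hp hθ hs₁ (hα_eq.symm ▸ hαs) hLs)
  obtain ⟨c, hc₀, hc⟩ := exists_between (lt_min one_pos (div_pos hσ (one_pos.trans_le hα)))
  obtain ⟨hc₁, hcσ⟩ := lt_min_iff.1 hc
  refine ⟨c, C, C / c ^ ((p - 1) / 2), hc₀, fun lam u v hlam h => ?_⟩
  have hcomp := const_mul_add_one_rpow_le_add_one hΩ hΩb h.left h.right h.eq_left h.eq_right hlam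
    hp₀.le hα hαp hc₀ hc₁.le ((lt_div_iff₀ (one_pos.trans_le hα)).1 hcσ)
  refine ⟨hcomp, ?_, (le_div_iff₀' (by positivity)).2 ?_⟩
  · exact (integral_le_integral_stabilityWeight_mul_rpow hΩ hΩb h.left h.right hp.le hθ.le
      hs₁.le).trans (hC lam u v hlam h).2
  · exact (rpow_mul_integral_add_one_rpow_le hΩ hΩb h.left h.right hp.le hαp hc₀.le
      hcomp).trans (hC lam u v hlam h).1

theorem exists_forall_add_le_of_Lpoly_neg (hΩ : IsOpen Ω) (hΩb : Bornology.IsBounded Ω)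
    (hp : 1 < p) (hpθ : p ≤ θ) (hσ : 0 < σ) (hs : p + 1 < s) (hLs : Lpoly p θ s < 0)
    (hNs : ((N : ℝ) - 2) / 2 < (θ + 1) / (p * θ - 1) * s) (L : ℝ) :
    ∃ M, ∀ lam u v, 0 < lam → lam ≤ L → IsStableSolution Ω p θ lam (σ * lam) u v →
      ∀ x ∈ Ω, u x + v x ≤ M := by
  have hpθ₁ : 0 < p * θ - 1 := sub_pos.2 (one_lt_mul_of_lt_of_le hp (hp.le.trans hpθ))
  have hp₁ : 0 < p + 1 := by linarith
  set α := (θ + 1) / (p + 1) with hα_def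
  have hα : 1 ≤ α := (one_le_div hp₁).2 (by linarith)
  have hα₀ : 0 < α := one_pos.trans_le hα
  have hθα : θ - α = (p * θ - 1) / (p + 1) := by
    rw [hα_def]
    field_simp
    ring
  have hθα₀ : 0 < θ - α := hθα ▸ div_pos hpθ₁ hp₁
  have hNE : (N : ℝ) / 2 * (θ - α) < θ - α + α * s := by
    have hαs : (θ + 1) / (p * θ - 1) * s * (θ - α) = α * s := by
      rw [hθα, hα_def, div_mul_eq_mul_div, div_mul_div_cancel₀ hpθ₁.ne', div_mul_eq_mul_div]
    linarith [mul_lt_mul_of_pos_right hNs hθα₀]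
  obtain ⟨r, hr, hNr, hEr, hrE⟩ := exists_exponent_of_mul_sub_lt hα₀ (sub_pos.1 hθα₀)
    (lt_add_of_pos_right _ (mul_pos hα₀ (hp₁.trans hs))) hNE
  obtain ⟨c, C₁, C₂, hc, hC⟩ := exists_forall_integral_add_one_rpow_le hΩ hΩb hp hpθ hσ hs hLs
    (div_mul_cancel₀ (θ + 1) hp₁.ne')
  obtain ⟨M, hM⟩ := exists_forall_add_le_of_integral_le hΩ hΩb hr (by linarith) hα hc
    (by positivity : 0 ≤ σ * |L|) hEr hrE C₁ C₂
  refine ⟨M, fun lam u v hlam hlamL h => ?_⟩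
  obtain ⟨hcomp, hv, hu⟩ := hC lam u v hlam h
  refine hM u v h.left h.right hcomp (fun x hx => ?_) hv hu
  rw [h.eq_right x hx]
  have hux := h.left.pos x hx
  gcongr
  exact hlamL.trans (le_abs_self L)

theorem exists_forall_add_le_of_le (hΩ : IsOpen Ω) (hΩb : Bornology.IsBounded Ω) (hp : 1 < p)
    (hpθ : p ≤ θ) (hσ : 0 < σ) (hroot : Hpoly p θ x₀ = 0) (hmax : ∀ x, x₀ < x → Hpoly p θ x ≠ 0)
    (hdim : (N : ℝ) < 2 + 2 * x₀) (L : ℝ) :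
    ∃ M, ∀ lam u v, 0 < lam → lam ≤ L → IsStableSolution Ω p θ lam (σ * lam) u v →
      ∀ x ∈ Ω, u x + v x ≤ M := by
  obtain ⟨s, hs, hLs, hNs⟩ := exists_Lpoly_neg hp (hp.trans_le hpθ) hroot hmax
    (by linarith : ((N : ℝ) - 2) / 2 < x₀)
  exact exists_forall_add_le_of_Lpoly_neg hΩ hΩb hp hpθ hσ hs hLs hNs L

end IsStableSolution

theorem stmt0_general {N : ℕ} {Ω : Set (EuclideanSpace ℝ (Fin N))} (hΩ : IsOpen Ω)
    (hΩb : Bornology.IsBounded Ω) {p θ σ x₀ : ℝ} (hp : 1 < p) (hθ : 1 < θ) (hσ : 0 < σ)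
    (hroot : Hpoly p θ x₀ = 0) (hmax : ∀ x, x₀ < x → Hpoly p θ x ≠ 0)
    (hdim : (N : ℝ) < 2 + 2 * x₀) (L : ℝ) :
    ∃ M, ∀ lam u v, 0 < lam → lam ≤ L → IsStableSolution Ω p θ lam (σ * lam) u v →
      ∀ x ∈ Ω, u x + v x ≤ M := by
  rcases le_total p θ with hpθ | hθp
  · exact IsStableSolution.exists_forall_add_le_of_le hΩ hΩb hp hpθ hσ hroot hmax hdim L
  · simp only [Hpoly_comm p θ] at hroot hmax
    obtain ⟨M, hM⟩ := IsStableSolution.exists_forall_add_le_of_le hΩ hΩb hθ hθp (inv_pos.2 hσ)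
      hroot hmax hdim (σ * L)
    refine ⟨M, fun lam u v hlam hlamL h x hx => ?_⟩
    rw [add_comm]
    exact hM (σ * lam) v u (mul_pos hσ hlam) (mul_le_mul_of_nonneg_left hlamL hσ.le)
      (by simpa only [inv_mul_cancel_left₀ hσ.ne'] using h.symm) x hx

/-- uniform boundedness of the minimal solutions (hence boundedness of the
extremal solution) when `N < 2 + 2x₀`, `x₀` the largest root of `H`. -/
theorem stmt0 {N : ℕ} (hN : 1 ≤ N) (Ω : Set (EuclideanSpace ℝ (Fin N)))
    (hΩo : IsOpen Ω) (hΩb : Bornology.IsBounded Ω) (hΩs : HasSmoothBoundary Ω)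
    (p θ σ lamStar x₀ : ℝ) (hp : 1 < p) (hpθ : p ≤ θ) (hσ : 0 < σ) (hls : 0 < lamStar)
    (u v : ℝ → EuclideanSpace ℝ (Fin N) → ℝ)
    (hreg : ∀ lam ∈ Set.Ioo (lamStar / 2) lamStar,
      ContDiffOn ℝ 2 (u lam) Ω ∧ ContDiffOn ℝ 2 (v lam) Ω ∧
      ContinuousOn (u lam) (closure Ω) ∧ ContinuousOn (v lam) (closure Ω))
    (hpos : ∀ lam ∈ Set.Ioo (lamStar / 2) lamStar, ∀ x ∈ Ω, 0 < u lam x ∧ 0 < v lam x)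
    (hbdry : ∀ lam ∈ Set.Ioo (lamStar / 2) lamStar, ∀ x ∈ frontier Ω,
      u lam x = 0 ∧ v lam x = 0)
    (heq : ∀ lam ∈ Set.Ioo (lamStar / 2) lamStar, ∀ x ∈ Ω,
      -lap (u lam) x = lam * (v lam x + 1) ^ p ∧
      -lap (v lam) x = σ * lam * (u lam x + 1) ^ θ)
    (hstab : ∀ lam ∈ Set.Ioo (lamStar / 2) lamStar,
      IsStable Ω lam (σ * lam) p θ (u lam) (v lam))
    (hmono : ∀ x ∈ Ω,
      MonotoneOn (fun lam => u lam x) (Set.Ioo (lamStar / 2) lamStar) ∧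
      MonotoneOn (fun lam => v lam x) (Set.Ioo (lamStar / 2) lamStar))
    (hx₀root : Hpoly p θ x₀ = 0) (hx₀max : ∀ x : ℝ, x₀ < x → Hpoly p θ x ≠ 0)
    (hdim : (N : ℝ) < 2 + 2 * x₀) :
    ∃ M : ℝ, ∀ lam ∈ Set.Ioo (lamStar / 2) lamStar, ∀ x ∈ Ω,
      u lam x + v lam x ≤ M := by
  obtain ⟨M, hM⟩ := stmt0_general hΩo hΩb hp (hp.trans_le hpθ) hσ hx₀root hx₀max hdim lamStar
  exact ⟨M, fun lam hlam => hM lam _ _ (by linarith [hlam.1]) hlam.2.le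
    { left := ⟨(hreg lam hlam).1, (hreg lam hlam).2.2.1, fun x hx => (hpos lam hlam x hx).1,
        fun x hx => (hbdry lam hlam x hx).1⟩
      right := ⟨(hreg lam hlam).2.1, (hreg lam hlam).2.2.2, fun x hx => (hpos lam hlam x hx).2,
        fun x hx => (hbdry lam hlam x hx).2⟩
      eq_left := fun x hx => (heq lam hlam x hx).1
      eq_right := fun x hx => (heq lam hlam x hx).2
      stable := hstab lam hlam }⟩
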